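/- arXiv:0909.4915 — 3 statements merged into one kernel-verified Lean document; each statement's English description precedes it below -/
import Mathlib

section
/- Let d ≥ 1 and let 𝓕 be a family of n hyperplanes in general position in ℝ^d. Then there exists a point x ∈ ℝ^d such that every ray starting at x intersects at least ⌊(n+d)/(d+1)⌋ of the hyperplanes of 𝓕. -/
open scoped InnerProductSpace

/-- A hyperplane in `ℝ^d`: an affine subspace of dimension `d-1`, i.e. the solution
set of one nontrivial linear equation. -/
def IsHyperplane {d : ℕ} (h : Set (EuclideanSpace ℝ (Fin d))) : Prop :=
  ∃ (v : EuclideanSpace ℝ (Fin d)) (c : ℝ), v ≠ 0 ∧ h = {y | ⟪y, v⟫_ℝ = c}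

/-- A family of hyperplanes in `ℝ^d` is in general position if any `d` of them have
exactly one point in common and any `d+1` of them have no common point. -/
def InGeneralPosition {d n : ℕ} (H : Fin n → Set (EuclideanSpace ℝ (Fin d))) : Prop :=
  (∀ s : Finset (Fin n), s.card = d → ∃! x, ∀ i ∈ s, x ∈ H i) ∧
  (∀ s : Finset (Fin n), s.card = d + 1 → ¬ ∃ x, ∀ i ∈ s, x ∈ H i)

/-- The ray starting at `x` in direction `u`. -/
def Ray {d : ℕ} (x u : EuclideanSpace ℝ (Fin d)) : Set (EuclideanSpace ℝ (Fin d)) :=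
  {y | ∃ t : ℝ, 0 ≤ t ∧ y = x + t • u}


lemma dcp_det_poly {d : ℕ} (A : EuclideanSpace ℝ (Fin d) →L[ℝ] EuclideanSpace ℝ (Fin d)) :
    ∃ p : Polynomial ℝ, p.natDegree ≤ d ∧ ∀ t : ℝ,
      p.eval t = (ContinuousLinearMap.id ℝ _ + t • A).det := by
  classical
  let b := (EuclideanSpace.basisFun (Fin d) ℝ).toBasis
  let M := LinearMap.toMatrix b b (A : EuclideanSpace ℝ (Fin d) →ₗ[ℝ] EuclideanSpace ℝ (Fin d))
  refine ⟨Matrix.det ((Polynomial.X : Polynomial ℝ) • M.map Polynomial.C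
      + (1 : Matrix (Fin d) (Fin d) ℝ).map Polynomial.C), ?_, ?_⟩
  · simpa using Polynomial.natDegree_det_X_add_C_le M 1
  · intro t
    rw [ContinuousLinearMap.det, ← LinearMap.det_toMatrix b, ← Polynomial.coe_evalRingHom,
      RingHom.map_det]
    congr 1
    have : ((ContinuousLinearMap.id ℝ (EuclideanSpace ℝ (Fin d)) + t • A :
        EuclideanSpace ℝ (Fin d) →L[ℝ] EuclideanSpace ℝ (Fin d)) :
        EuclideanSpace ℝ (Fin d) →ₗ[ℝ] EuclideanSpace ℝ (Fin d))
        = LinearMap.id + t • (A : EuclideanSpace ℝ (Fin d) →ₗ[ℝ] EuclideanSpace ℝ (Fin d)) := rfl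
    rw [this, map_add (LinearMap.toMatrix b b), map_smul (LinearMap.toMatrix b b), LinearMap.toMatrix_id]
    ext i j
    by_cases h : i = j
    · subst h
      simp [M]
      ring
    · simp [M, h]
      ring

lemma dcp_det_interp (d : ℕ) (δ : ℝ) (hδ : 0 < δ) :
    ∃ (c t : ℕ → ℝ), (∀ j, 0 < t j ∧ t j < δ) ∧ ∑ j ∈ Finset.range (d + 1), c j = 1 ∧
      ∀ A : EuclideanSpace ℝ (Fin d) →L[ℝ] EuclideanSpace ℝ (Fin d),
        (ContinuousLinearMap.id ℝ _ + A).det =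
          ∑ j ∈ Finset.range (d + 1), c j * (ContinuousLinearMap.id ℝ _ + t j • A).det := by
  let t : ℕ → ℝ := fun j => δ / (j + 2)
  have hinj : Set.InjOn t (Finset.range (d + 1)) := by
    intro i _ j _ h
    simp only [t] at h
    have h1 : (i : ℝ) + 2 ≠ 0 := by positivity
    have h2 : (j : ℝ) + 2 ≠ 0 := by positivity
    rw [div_eq_div_iff h1 h2] at h
    have := mul_left_cancel₀ hδ.ne' h
    exact_mod_cast (by linarith : (i : ℝ) = j)
  have key : ∀ p : Polynomial ℝ, p.natDegree ≤ d → p.eval 1 =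
      ∑ j ∈ Finset.range (d + 1),
        (Lagrange.basis (Finset.range (d + 1)) t j).eval 1 * p.eval (t j) := by
    intro p hp
    have := Lagrange.eq_interpolate (f := p) hinj (by
      rw [Finset.card_range]
      refine lt_of_le_of_lt Polynomial.degree_le_natDegree ?_
      exact_mod_cast Nat.lt_succ_of_le hp)
    conv_lhs => rw [this]
    rw [Lagrange.interpolate_apply, Polynomial.eval_finsetSum]
    simp [mul_comm]
  refine ⟨fun j => (Lagrange.basis (Finset.range (d + 1)) t j).eval 1, t, ?_, ?_, ?_⟩
  · intro j
    have : (0 : ℝ) < j + 2 := by positivity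
    refine ⟨by positivity, ?_⟩
    rw [div_lt_iff₀ this]
    nlinarith [(Nat.cast_nonneg j : (0 : ℝ) ≤ j)]
  · simpa using (key 1 (by simp)).symm
  · intro A
    obtain ⟨p, hp, hp'⟩ := dcp_det_poly A
    have := key p hp
    simp only [hp', one_smul] at this
    exact this

lemma dcp_volume {d : ℕ} (r : ℝ)
    (g : EuclideanSpace ℝ (Fin d) → EuclideanSpace ℝ (Fin d)) (hg : ContDiff ℝ 1 g)
    (h0 : ∀ x, ‖x‖ = r → g x = 0) :
    ∃ δ > 0, ∀ t : ℝ, 0 < t → t < δ →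
      ∫ x in Metric.closedBall (0 : EuclideanSpace ℝ (Fin d)) r,
        (ContinuousLinearMap.id ℝ _ + t • fderiv ℝ g x).det =
      MeasureTheory.volume.real (Metric.closedBall (0 : EuclideanSpace ℝ (Fin d)) r) := by
  classical
  set B := Metric.closedBall (0 : EuclideanSpace ℝ (Fin d)) r with hB
  have hBc : IsCompact B := isCompact_closedBall _ _
  have hcont : Continuous (fderiv ℝ g) := hg.continuous_fderiv (by simp)
  obtain ⟨C, hC⟩ := hBc.exists_bound_of_continuousOn hcont.continuousOn
  set K : NNReal := Real.toNNReal (max C 1) with hK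
  have hKv : (K : ℝ) = max C 1 := Real.coe_toNNReal _ (by positivity)
  have hKpos : (0 : ℝ) < K := by rw [hKv]; positivity
  have hdiff : ∀ x, HasFDerivAt g (fderiv ℝ g x) x :=
    fun x => (hg.differentiable (by simp) x).hasFDerivAt
  have hgl : LipschitzOnWith K g B := by
    refine (convex_closedBall _ _).lipschitzOnWith_of_nnnorm_hasFDerivWithin_le
      (fun x _ => (hdiff x).hasFDerivWithinAt) ?_
    intro x hx
    rw [← NNReal.coe_le_coe, hKv]
    exact (hC x hx).trans (le_max_left _ _)
  let G : EuclideanSpace ℝ (Fin d) → EuclideanSpace ℝ (Fin d) := fun x => if x ∈ B then g x else 0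
  have hmix : ∀ x ∈ B, ∀ y ∉ B, ‖g x‖ ≤ K * ‖x - y‖ := by
    intro x hx y hy
    have hx' : ‖x‖ ≤ r := by simpa [hB] using hx
    have hy' : r < ‖y‖ := by simpa [hB] using hy
    have : r ∈ (fun s : ℝ => ‖x + s • (y - x)‖) '' Set.Icc 0 1 := by
      apply intermediate_value_Icc zero_le_one (by fun_prop)
      simp [hx', hy'.le]
    obtain ⟨s, hs, hsr⟩ := this
    simp only at hsr
    have hz : x + s • (y - x) ∈ B := by simp [hB, hsr]
    have h1 := hgl.dist_le_mul x hx _ hz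
    rw [h0 _ hsr, dist_zero_right, dist_eq_norm] at h1
    refine h1.trans ?_
    gcongr
    have : x - (x + s • (y - x)) = s • (x - y) := by
      rw [smul_sub, smul_sub]; abel
    rw [this, norm_smul, Real.norm_of_nonneg hs.1]
    exact mul_le_of_le_one_left (norm_nonneg _) hs.2
  have hGl : LipschitzWith K G := by
    refine LipschitzWith.of_dist_le_mul fun x y => ?_
    by_cases hx : x ∈ B <;> by_cases hy : y ∈ B
    · simp only [G, hx, hy, if_true]; exact hgl.dist_le_mul x hx y hy
    · simp only [G, hx, hy, if_true, if_false, dist_zero_right, dist_eq_norm x y]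
      exact hmix x hx y hy
    · simp only [G, hx, hy, if_true, if_false, dist_zero_left, dist_comm x y, dist_eq_norm y x]
      exact hmix y hy x hx
    · simp only [G, hx, hy, if_false, dist_self]; positivity
  have hdet : ∃ ε > 0, ∀ A : EuclideanSpace ℝ (Fin d) →L[ℝ] EuclideanSpace ℝ (Fin d),
      ‖A‖ < ε → 0 < (ContinuousLinearMap.id ℝ _ + A).det := by
    have hc : Continuous fun A : EuclideanSpace ℝ (Fin d) →L[ℝ] EuclideanSpace ℝ (Fin d) =>
        (ContinuousLinearMap.id ℝ _ + A).det :=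
      ContinuousLinearMap.continuous_det.comp (by fun_prop)
    have h1 : (0 : ℝ) < (ContinuousLinearMap.id ℝ (EuclideanSpace ℝ (Fin d)) + 0).det := by
      simp [ContinuousLinearMap.det]
    obtain ⟨ε, hε, h⟩ := Metric.mem_nhds_iff.1 (hc.continuousAt.eventually (lt_mem_nhds h1))
    exact ⟨ε, hε, fun A hA => h (by simpa using hA)⟩
  obtain ⟨ε, hε, hdet⟩ := hdet
  refine ⟨min (ε / K) (1 / K), by positivity, fun t ht0 ht => ?_⟩
  have ht1 : t * K < ε := by
    have := ht.trans_le (min_le_left _ _)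
    rwa [lt_div_iff₀ hKpos] at this
  have ht2 : t * K < 1 := by
    have := ht.trans_le (min_le_right _ _)
    rwa [lt_div_iff₀ hKpos] at this
  let F : EuclideanSpace ℝ (Fin d) → EuclideanSpace ℝ (Fin d) := fun x => x + t • G x
  have hF : ApproximatesLinearOn F
      ((ContinuousLinearEquiv.refl ℝ (EuclideanSpace ℝ (Fin d)) :
        EuclideanSpace ℝ (Fin d) ≃L[ℝ] EuclideanSpace ℝ (Fin d)) :
        EuclideanSpace ℝ (Fin d) →L[ℝ] EuclideanSpace ℝ (Fin d)) Set.univ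
        (Real.toNNReal t * K) := by
    rw [ApproximatesLinearOn.approximatesLinearOn_iff_lipschitzOnWith]
    refine LipschitzOnWith.of_dist_le_mul fun x _ y _ => ?_
    have h := hGl.dist_le_mul x y
    rw [dist_eq_norm] at h ⊢
    have : (F - ⇑((ContinuousLinearEquiv.refl ℝ (EuclideanSpace ℝ (Fin d)) :
        EuclideanSpace ℝ (Fin d) ≃L[ℝ] EuclideanSpace ℝ (Fin d)) :
        EuclideanSpace ℝ (Fin d) →L[ℝ] EuclideanSpace ℝ (Fin d))) x
        - (F - ⇑((ContinuousLinearEquiv.refl ℝ (EuclideanSpace ℝ (Fin d)) :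
        EuclideanSpace ℝ (Fin d) ≃L[ℝ] EuclideanSpace ℝ (Fin d)) :
        EuclideanSpace ℝ (Fin d) →L[ℝ] EuclideanSpace ℝ (Fin d))) y = t • (G x - G y) := by
      simp [F, smul_sub]
    rw [this, norm_smul, Real.norm_of_nonneg ht0.le, NNReal.coe_mul, Real.coe_toNNReal t ht0.le,
      mul_assoc]
    gcongr
  have hc : Subsingleton (EuclideanSpace ℝ (Fin d)) ∨ Real.toNNReal t * K <
      ‖((ContinuousLinearEquiv.refl ℝ (EuclideanSpace ℝ (Fin d))).symm :
        EuclideanSpace ℝ (Fin d) →L[ℝ] EuclideanSpace ℝ (Fin d))‖₊⁻¹ := by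
    by_cases hs : Subsingleton (EuclideanSpace ℝ (Fin d))
    · exact Or.inl hs
    · right
      have := not_subsingleton_iff_nontrivial.1 hs
      have h1 : ‖((ContinuousLinearEquiv.refl ℝ (EuclideanSpace ℝ (Fin d))).symm :
        EuclideanSpace ℝ (Fin d) →L[ℝ] EuclideanSpace ℝ (Fin d))‖₊ = 1 := by
        apply NNReal.coe_injective
        exact ContinuousLinearMap.norm_id
      rw [h1, inv_one, ← NNReal.coe_lt_coe, NNReal.coe_mul, Real.coe_toNNReal t ht0.le]
      exact ht2
  have hinj : Function.Injective F := by
    intro x y hxy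
    exact hF.injOn hc (Set.mem_univ x) (Set.mem_univ y) hxy
  have hsurj : Function.Surjective F := hF.surjective hc
  have hout : ∀ x ∉ B, F x = x := fun x hx => by simp [F, G, hx]
  have himg : F '' B = B := by
    ext y
    constructor
    · rintro ⟨x, hx, rfl⟩
      by_contra hy
      exact hy (by rw [hinj (hout _ hy)]; exact hx)
    · intro hy
      obtain ⟨x, rfl⟩ := hsurj y
      by_cases hx : x ∈ B
      · exact ⟨x, hx, rfl⟩
      · rw [hout x hx] at hy; exact absurd hy hx
  have hder : ∀ x ∈ B, HasFDerivWithinAt F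
      (ContinuousLinearMap.id ℝ _ + t • fderiv ℝ g x) B x := by
    intro x hx
    have h1 : HasFDerivWithinAt (fun y => y + t • g y)
        (ContinuousLinearMap.id ℝ _ + t • fderiv ℝ g x) B x :=
      ((hasFDerivAt_id x).add ((hdiff x).const_smul t)).hasFDerivWithinAt
    refine h1.congr (fun y hy => ?_) ?_
    · simp only [F, G, if_pos hy]
    · simp only [F, G, if_pos hx]
  have hcv := MeasureTheory.integral_image_eq_integral_abs_det_fderiv_smul MeasureTheory.volume
    (s := B) (f := F) hBc.measurableSet hder hinj.injOn (fun _ => (1 : ℝ))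
  rw [himg] at hcv
  simp only [MeasureTheory.integral_const, smul_eq_mul, mul_one, MeasureTheory.measureReal_restrict_apply_univ] at hcv
  rw [hcv]
  refine MeasureTheory.setIntegral_congr_fun hBc.measurableSet fun x hx => ?_
  have hpos : 0 < (ContinuousLinearMap.id ℝ _ + t • fderiv ℝ g x).det := by
    apply hdet
    rw [norm_smul, Real.norm_of_nonneg ht0.le]
    refine lt_of_le_of_lt ?_ ht1
    gcongr
    rw [hKv]
    exact (hC x hx).trans (le_max_left _ _)
  exact (abs_of_pos hpos).symm

lemma dcp_no_retract {d : ℕ} (r : ℝ) (hr : 0 < r)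
    (f : EuclideanSpace ℝ (Fin d) → EuclideanSpace ℝ (Fin d)) (hf : ContDiff ℝ 1 f)
    (h0 : ∀ x, ‖x‖ = r → f x = x) (h1 : ∀ x, ‖f x‖ = r) : False := by
  have hg : ContDiff ℝ 1 (fun x => f x - x) := hf.sub contDiff_id
  obtain ⟨δ, hδ, hvol⟩ := dcp_volume r _ hg (fun x hx => by simp [h0 x hx])
  obtain ⟨c, t, ht, hc, hdet⟩ := dcp_det_interp d δ hδ
  have hfd : ∀ x, HasFDerivAt f (fderiv ℝ f x) x :=
    fun x => (hf.differentiable (by simp) x).hasFDerivAt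
  have hgd : ∀ x, fderiv ℝ (fun x => f x - x) x = fderiv ℝ f x - ContinuousLinearMap.id ℝ _ :=
    fun x => ((hfd x).sub (hasFDerivAt_id x)).fderiv
  have hz : ∀ x, (fderiv ℝ f x).det = 0 := by
    intro x
    by_contra hne
    obtain ⟨w, hw⟩ := (LinearMap.equivOfDetNeZero (fderiv ℝ f x :
      EuclideanSpace ℝ (Fin d) →ₗ[ℝ] EuclideanSpace ℝ (Fin d)) hne).surjective (f x)
    have h2 : HasFDerivAt (fun y => ‖f y‖ ^ 2) _ x := (hfd x).norm_sq
    have h3 : (fun y => ‖f y‖ ^ 2) = fun _ => r ^ 2 := by ext y; rw [h1]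
    rw [h3] at h2
    have h4 := h2.unique (hasFDerivAt_const _ _)
    have h5 := congrArg (fun L => L w) h4
    have hw' : fderiv ℝ f x w = f x := hw
    simp [hw', h1, hr.ne'] at h5
  have hcont : Continuous (fderiv ℝ (fun x => f x - x)) := hg.continuous_fderiv (by simp)
  have hint : ∀ s : ℝ, MeasureTheory.IntegrableOn
      (fun x => (ContinuousLinearMap.id ℝ _ + s • fderiv ℝ (fun x => f x - x) x).det)
      (Metric.closedBall (0 : EuclideanSpace ℝ (Fin d)) r) := by
    intro s
    refine Continuous.continuousOn ?_ |>.integrableOn_compact (isCompact_closedBall _ _)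
    exact ContinuousLinearMap.continuous_det.comp (by fun_prop)
  have hA : ∫ x in Metric.closedBall (0 : EuclideanSpace ℝ (Fin d)) r,
      (ContinuousLinearMap.id ℝ _ + fderiv ℝ (fun x => f x - x) x).det = 0 := by
    simp [hgd, hz]
  simp only [fun x => hdet (fderiv ℝ (fun x => f x - x) x)] at hA
  rw [MeasureTheory.integral_finsetSum _ (fun j _ => (hint (t j)).const_mul (c j))] at hA
  simp_rw [MeasureTheory.integral_const_mul] at hA
  rw [Finset.sum_congr rfl (fun j _ => by rw [hvol (t j) (ht j).1 (ht j).2]),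
    ← Finset.sum_mul, hc, one_mul] at hA
  have hpos : 0 < MeasureTheory.volume (Metric.closedBall (0 : EuclideanSpace ℝ (Fin d)) r) :=
    Metric.measure_closedBall_pos _ _ hr
  have hfin : MeasureTheory.volume (Metric.closedBall (0 : EuclideanSpace ℝ (Fin d)) r) ≠ ⊤ :=
    (isCompact_closedBall _ _).measure_lt_top.ne
  exact (ENNReal.toReal_pos hpos.ne' hfin).ne' hA

lemma dcp_no_field {d : ℕ} (r : ℝ) (hr : 0 < r)
    (v : EuclideanSpace ℝ (Fin d) → EuclideanSpace ℝ (Fin d)) (hv : ContDiff ℝ 1 v)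
    (h0 : ∀ x, ‖x‖ = r → v x = x) (h1 : ∀ x, v x ≠ 0) : False := by
  refine dcp_no_retract r hr (fun x => (r / ‖v x‖) • v x) ?_ ?_ ?_
  · exact (contDiff_const.div (hv.norm ℝ h1) (fun x => norm_ne_zero_iff.2 (h1 x))).smul hv
  · intro x hx
    simp [h0 x hx, hx, hr.ne']
  · intro x
    rw [norm_smul, norm_div, norm_norm, Real.norm_of_nonneg hr.le,
      div_mul_cancel₀ _ (norm_ne_zero_iff.2 (h1 x))]

noncomputable def dcpMap {d n : ℕ} (a : Fin n → EuclideanSpace ℝ (Fin d)) (T : Finset (Fin n)) :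
    EuclideanSpace ℝ (Fin d) →ₗ[ℝ] (T → ℝ) :=
  LinearMap.pi fun i => (innerSL ℝ (a i) : EuclideanSpace ℝ (Fin d) →L[ℝ] ℝ).toLinearMap

lemma dcpMap_apply {d n : ℕ} (a : Fin n → EuclideanSpace ℝ (Fin d)) (T : Finset (Fin n))
    (y : EuclideanSpace ℝ (Fin d)) (i : T) : dcpMap a T y i = ⟪y, a i⟫_ℝ := by
  simp [dcpMap, real_inner_comm]

lemma dcp_inj {d n : ℕ} (a : Fin n → EuclideanSpace ℝ (Fin d)) (T : Finset (Fin n))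
    (h : ∀ y, (∀ i ∈ T, ⟪y, a i⟫_ℝ = 0) → y = 0) : Function.Injective (dcpMap a T) := by
  rw [injective_iff_map_eq_zero]
  intro y hy
  apply h
  intro i hi
  have := congrFun hy ⟨i, hi⟩
  rwa [dcpMap_apply] at this

lemma dcp_surj {d n : ℕ} (a : Fin n → EuclideanSpace ℝ (Fin d)) (T : Finset (Fin n))
    (hT : T.card = d)
    (h : ∀ y, (∀ i ∈ T, ⟪y, a i⟫_ℝ = 0) → y = 0) (s : Fin n → ℝ) :
    ∃ w, ∀ i ∈ T, ⟪w, a i⟫_ℝ = s i := by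
  have hs : Function.Surjective (dcpMap a T) :=
    (LinearMap.injective_iff_surjective_of_finrank_eq_finrank (by simp [hT])).1 (dcp_inj a T h)
  obtain ⟨w, hw⟩ := hs (fun i => s i)
  refine ⟨w, fun i hi => ?_⟩
  have := congrFun hw ⟨i, hi⟩
  rwa [dcpMap_apply] at this

lemma dcp_bdd {d n : ℕ} (a : Fin n → EuclideanSpace ℝ (Fin d)) (b : Fin n → ℝ)
    (T : Finset (Fin n))
    (h : ∀ y, (∀ i ∈ T, ⟪y, a i⟫_ℝ = 0) → y = 0) :
    ∃ R : ℝ, 0 ≤ R ∧ ∀ x, (∀ i ∈ T, |⟪x, a i⟫_ℝ| ≤ |b i|) → ‖x‖ ≤ R := by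
  obtain ⟨K, hK, hL⟩ := LinearMap.exists_antilipschitzWith (dcpMap a T)
    (LinearMap.ker_eq_bot.2 (dcp_inj a T h))
  refine ⟨K * ∑ i, |b i|, by positivity, fun x hx => ?_⟩
  have h1 := hL.le_mul_dist x 0
  rw [map_zero, dist_zero_right, dist_zero_right] at h1
  refine h1.trans ?_
  gcongr
  rw [pi_norm_le_iff_of_nonneg (by positivity)]
  intro i
  rw [dcpMap_apply, Real.norm_eq_abs]
  exact (hx i i.2).trans (Finset.single_le_sum (f := fun i => |b i|) (fun i _ => abs_nonneg _)
    (Finset.mem_univ i.1))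

/-- Indices of the hyperplanes for which `u` does not strictly point away. -/
noncomputable def dcpN {d n : ℕ} (a : Fin n → EuclideanSpace ℝ (Fin d)) (b : Fin n → ℝ)
    (x u : EuclideanSpace ℝ (Fin d)) : Finset (Fin n) :=
  {i | 0 ≤ (b i - ⟪x, a i⟫_ℝ) * ⟪u, a i⟫_ℝ}

/-- Directions witnessing that `x` has small depth. -/
def dcpU {d n : ℕ} (a : Fin n → EuclideanSpace ℝ (Fin d)) (b : Fin n → ℝ)
    (x : EuclideanSpace ℝ (Fin d)) : Set (EuclideanSpace ℝ (Fin d)) :=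
  {u | (d + 1) * (dcpN a b x u).card < n}

lemma dcp_zero_notMem {d n : ℕ} (a : Fin n → EuclideanSpace ℝ (Fin d)) (b : Fin n → ℝ)
    (x : EuclideanSpace ℝ (Fin d)) : (0 : EuclideanSpace ℝ (Fin d)) ∉ convexHull ℝ (dcpU a b x) := by
  classical
  intro h
  rw [convexHull_eq_union] at h
  simp only [Set.mem_iUnion, exists_prop] at h
  obtain ⟨t, ht, hai, h0⟩ := h
  have hcard : t.card ≤ d + 1 := by
    have := hai.card_le_finrank_succ
    simp only [Fintype.card_coe] at this
    refine this.trans ?_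
    gcongr
    exact (Submodule.finrank_le _).trans (by simp)
  have htn : t.Nonempty := by
    by_contra hne
    rw [Finset.not_nonempty_iff_eq_empty] at hne
    simp [hne] at h0
  have hn : 0 < n := by
    obtain ⟨u, hu⟩ := htn
    have : _ < n := ht hu
    omega
  have hlt : (t.biUnion (dcpN a b x)).card < n := by
    have h1 : (d + 1) * (t.biUnion (dcpN a b x)).card ≤ (d + 1) * (n - 1) := by
      calc (d + 1) * (t.biUnion (dcpN a b x)).card
          ≤ (d + 1) * ∑ u ∈ t, (dcpN a b x u).card := by
            gcongr; exact Finset.card_biUnion_le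
        _ = ∑ u ∈ t, (d + 1) * (dcpN a b x u).card := Finset.mul_sum _ _ _
        _ ≤ ∑ u ∈ t, (n - 1) := Finset.sum_le_sum fun u hu => by
            have : (d + 1) * (dcpN a b x u).card < n := ht hu
            omega
        _ = t.card * (n - 1) := by simp
        _ ≤ _ := by gcongr
    have := Nat.le_of_mul_le_mul_left h1 (by omega)
    omega
  obtain ⟨i, hi⟩ : ∃ i, i ∉ t.biUnion (dcpN a b x) := by
    by_contra! hall
    rw [Finset.eq_univ_iff_forall.2 hall] at hlt
    simp at hlt
  have hconv : Convex ℝ {u : EuclideanSpace ℝ (Fin d) |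
      ((b i - ⟪x, a i⟫_ℝ) • innerSL ℝ (a i)) u < 0} :=
    convex_halfSpace_lt (LinearMap.isLinear
      (((b i - ⟪x, a i⟫_ℝ) • innerSL ℝ (a i) : EuclideanSpace ℝ (Fin d) →L[ℝ] ℝ) :
        EuclideanSpace ℝ (Fin d) →ₗ[ℝ] ℝ)) 0
  have hsub : (t : Set (EuclideanSpace ℝ (Fin d))) ⊆ {u : EuclideanSpace ℝ (Fin d) |
      ((b i - ⟪x, a i⟫_ℝ) • innerSL ℝ (a i)) u < 0} := by
    intro u hu
    have : i ∉ dcpN a b x u := fun hh => hi (Finset.mem_biUnion.2 ⟨u, hu, hh⟩)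
    simp only [dcpN, Finset.mem_filter, Finset.mem_univ, true_and, not_le] at this
    simpa [real_inner_comm] using this
  have := convexHull_min hsub hconv h0
  simp at this

lemma dcp_open {d n : ℕ} (a : Fin n → EuclideanSpace ℝ (Fin d)) (b : Fin n → ℝ)
    (x u : EuclideanSpace ℝ (Fin d)) (hu : u ∈ dcpU a b x) :
    ∀ᶠ y in nhds x, u ∈ dcpU a b y := by
  have h : ∀ᶠ y in nhds x, ∀ i, (b i - ⟪x, a i⟫_ℝ) * ⟪u, a i⟫_ℝ < 0 →
      (b i - ⟪y, a i⟫_ℝ) * ⟪u, a i⟫_ℝ < 0 := by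
    rw [Filter.eventually_all]
    intro i
    by_cases hi : (b i - ⟪x, a i⟫_ℝ) * ⟪u, a i⟫_ℝ < 0
    · have hc : Continuous fun y => (b i - ⟪y, a i⟫_ℝ) * ⟪u, a i⟫_ℝ := by fun_prop
      filter_upwards [hc.continuousAt.eventually (gt_mem_nhds hi)] with y hy _ using hy
    · simp [hi]
  filter_upwards [h] with y hy
  have hsub : dcpN a b y u ⊆ dcpN a b x u := by
    intro i hi
    simp only [dcpN, Finset.mem_filter, Finset.mem_univ, true_and] at hi ⊢
    by_contra hlt
    exact absurd (hy i (not_le.1 hlt)) (not_lt.2 hi)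
  have h1 : (d + 1) * (dcpN a b x u).card < n := hu
  exact lt_of_le_of_lt (Nat.mul_le_mul_left _ (Finset.card_le_card hsub)) h1

open scoped Manifold ContDiff in
lemma dcp_exists {d n : ℕ} (a : Fin n → EuclideanSpace ℝ (Fin d)) (b : Fin n → ℝ)
    (hT : ∀ T : Finset (Fin n), T.card = d → ∀ y, (∀ i ∈ T, ⟪y, a i⟫_ℝ = 0) → y = 0)
    (hn : ∀ m, m < d → (d + 1) * m < n) : ∃ x, dcpU a b x = ∅ := by
  classical
  by_contra! hne
  have hR : ∀ T : Finset (Fin n), ∃ R : ℝ, 0 ≤ R ∧ (T.card = d → ∀ x,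
      (∀ i ∈ T, |⟪x, a i⟫_ℝ| ≤ |b i|) → ‖x‖ ≤ R) := by
    intro T
    by_cases h : T.card = d
    · obtain ⟨R, h0, hR⟩ := dcp_bdd a b T (hT T h)
      exact ⟨R, h0, fun _ => hR⟩
    · exact ⟨0, le_rfl, fun h' => absurd h' h⟩
  choose R hR0 hR using hR
  set r : ℝ := ∑ T, R T with hr
  have hr0 : 0 ≤ r := Finset.sum_nonneg fun T _ => hR0 T
  have hfar : ∀ x, r < ‖x‖ → x ∈ dcpU a b x := by
    intro x hx
    apply hn
    by_contra! hge
    obtain ⟨T, hTs, hTc⟩ := Finset.exists_subset_card_eq hge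
    have h1 := hR T hTc x fun i hi => by
      have := hTs hi
      simp only [dcpN, Finset.mem_filter, Finset.mem_univ, true_and] at this
      rw [← sq_le_sq, sq]
      have h2 : ⟪x, a i⟫_ℝ * ⟪x, a i⟫_ℝ ≤ b i * ⟪x, a i⟫_ℝ := by linarith
      nlinarith [sq_nonneg (b i - ⟪x, a i⟫_ℝ)]
    have h2 : R T ≤ r := Finset.single_le_sum (f := R) (fun T _ => hR0 T) (Finset.mem_univ T)
    linarith
  let t : EuclideanSpace ℝ (Fin d) → Set (EuclideanSpace ℝ (Fin d)) := fun x =>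
    {u | u ∈ convexHull ℝ (dcpU a b x) ∧ (r + 1 ≤ ‖x‖ → u = x)}
  have htc : ∀ x, Convex ℝ (t x) := by
    intro x
    have h2 : Convex ℝ {u : EuclideanSpace ℝ (Fin d) | r + 1 ≤ ‖x‖ → u = x} := by
      intro p hp q hq α β _ _ hαβ hx
      rw [hp hx, hq hx, ← add_smul, hαβ, one_smul]
    exact (convex_convexHull ℝ _).inter h2
  obtain ⟨v, hv⟩ := exists_contMDiffMap_forall_mem_convex_of_local
    (n := 1) 𝓘(ℝ, EuclideanSpace ℝ (Fin d)) htc (by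
      intro x
      by_cases hx : r + 1 ≤ ‖x‖
      · refine ⟨{y | r < ‖y‖}, (isOpen_lt continuous_const continuous_norm).mem_nhds
          (by simp only [Set.mem_ofPred_eq]; linarith), id, contMDiffOn_id, fun y hy => ?_⟩
        exact ⟨subset_convexHull ℝ _ (hfar y hy), fun _ => rfl⟩
      · obtain ⟨u, hu⟩ := hne x
        have hx' : ∀ᶠ y in nhds x, ‖y‖ < r + 1 :=
          continuous_norm.continuousAt.eventually (gt_mem_nhds (not_le.1 hx))
        refine ⟨_, (dcp_open a b x u hu).and hx', fun _ => u, contMDiffOn_const, fun y hy => ?_⟩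
        exact ⟨subset_convexHull ℝ _ hy.1, fun h => absurd hy.2 (not_lt.2 h)⟩)
  refine dcp_no_field (r + 1) (by linarith) v (contMDiff_iff_contDiff.1 v.contMDiff) ?_ ?_
  · intro x hx
    exact (hv x).2 hx.ge
  · intro x hx
    have := (hv x).1
    rw [hx] at this
    exact dcp_zero_notMem a b x this

/-- The dual central point theorem (discrete case). -/
theorem dual_central_point (d n : ℕ) (hd : 1 ≤ d)
    (H : Fin n → Set (EuclideanSpace ℝ (Fin d)))
    (hH : ∀ i, IsHyperplane (H i))
    (hgp : InGeneralPosition H) :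
    ∃ x : EuclideanSpace ℝ (Fin d), ∀ u : EuclideanSpace ℝ (Fin d), ‖u‖ = 1 →
      (n + d) / (d + 1) ≤ {i : Fin n | (Ray x u ∩ H i).Nonempty}.ncard := by
  classical
  choose a b ha hHab using hH
  set k := (n + d) / (d + 1) with hk
  have hself : ∀ x u i, x ∈ H i → (Ray x u ∩ H i).Nonempty := fun x u i hx =>
    ⟨x, ⟨0, le_rfl, by simp⟩, hx⟩
  -- points lying on many hyperplanes
  have htriv : ∀ (T : Finset (Fin n)) x, (∀ i ∈ T, x ∈ H i) → ∀ u,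
      T.card ≤ {i : Fin n | (Ray x u ∩ H i).Nonempty}.ncard := by
    intro T x hx u
    rw [← Set.ncard_coe_finset]
    exact Set.ncard_le_ncard (fun i hi => hself x u i (hx i hi)) (Set.toFinite _)
  rcases Nat.lt_or_ge n d with hnd | hnd
  · rcases Nat.eq_zero_or_pos n with h0 | h0
    · refine ⟨0, fun u _ => ?_⟩
      have : k = 0 := by rw [hk, h0]; exact Nat.div_eq_of_lt (by omega)
      omega
    · have hk1 : k ≤ 1 := by
        have : k < 2 := by rw [hk]; exact Nat.div_lt_of_lt_mul (by omega)
        omega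
      let i : Fin n := ⟨0, h0⟩
      have hai : ⟪a i, a i⟫_ℝ ≠ 0 := inner_self_ne_zero.2 (ha i)
      refine ⟨(b i / ⟪a i, a i⟫_ℝ) • a i, fun u _ => hk1.trans ?_⟩
      refine le_trans (by simp) (htriv {i} _ ?_ u)
      intro j hj
      rw [Finset.mem_singleton.1 hj, hHab i, Set.mem_ofPred_eq, real_inner_smul_left]
      exact div_mul_cancel₀ _ hai
  rcases Nat.lt_or_ge d k with hkd | hkd
  swap
  · obtain ⟨T, -, hTc⟩ := Finset.exists_subset_card_eq
      (s := (Finset.univ : Finset (Fin n))) (n := d) (by simpa using hnd)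
    obtain ⟨x, hx, -⟩ := hgp.1 T hTc
    exact ⟨x, fun u _ => by have := htriv T x hx u; omega⟩
  have hT : ∀ T : Finset (Fin n), T.card = d → ∀ y, (∀ i ∈ T, ⟪y, a i⟫_ℝ = 0) → y = 0 := by
    intro T hTc y hy
    obtain ⟨x, hx, hux⟩ := hgp.1 T hTc
    have := hux (x + y) fun i hi => by
      have h1 := hx i hi
      simp only [hHab i, Set.mem_ofPred_eq] at h1 ⊢
      rw [inner_add_left, h1, hy i hi, add_zero]
    simpa using this
  have hkn : ∀ m, m < k → (d + 1) * m < n := by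
    intro m hm
    have h1 : (d + 1) * k ≤ n + d := Nat.mul_div_le _ _
    have h2 : (d + 1) * (m + 1) ≤ (d + 1) * k := Nat.mul_le_mul_left _ hm
    rw [mul_add] at h2
    omega
  obtain ⟨x, hx⟩ := dcp_exists a b hT (fun m hm => hkn m (by omega))
  refine ⟨x, fun u hu => ?_⟩
  by_contra! hlt
  have hu0 : u ≠ 0 := by rintro rfl; simp at hu
  set Z : Finset (Fin n) := {i | ⟪u, a i⟫_ℝ = 0} with hZ
  have hZc : Z.card ≤ d := by
    by_contra! h
    obtain ⟨T, hTs, hTc⟩ := Finset.exists_subset_card_eq h.le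
    exact hu0 (hT T hTc u fun i hi => by simpa [hZ] using hTs hi)
  obtain ⟨T, hZT, -, hTc⟩ := Finset.exists_subsuperset_card_eq (Finset.subset_univ Z) hZc
    (by simpa using hnd)
  obtain ⟨w, hw⟩ := dcp_surj a T hTc (hT T hTc) (fun i => -(b i - ⟪x, a i⟫_ℝ))
  have hev : ∀ᶠ ε in nhdsWithin (0 : ℝ) (Set.Ioi 0), ∀ i,
      (b i - ⟪x, a i⟫_ℝ) * ⟪u, a i⟫_ℝ < 0 →
      (b i - ⟪x, a i⟫_ℝ) * ⟪u + ε • w, a i⟫_ℝ < 0 := by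
    rw [Filter.eventually_all]
    intro i
    by_cases hi : (b i - ⟪x, a i⟫_ℝ) * ⟪u, a i⟫_ℝ < 0
    · have hc : Continuous fun ε : ℝ => (b i - ⟪x, a i⟫_ℝ) * ⟪u + ε • w, a i⟫_ℝ := by fun_prop
      have h0 : (b i - ⟪x, a i⟫_ℝ) * ⟪u + (0 : ℝ) • w, a i⟫_ℝ < 0 := by simpa using hi
      have := hc.continuousAt.eventually (gt_mem_nhds h0)
      filter_upwards [nhdsWithin_le_nhds this] with y hy _ using hy
    · simp [hi]
  obtain ⟨ε, hε, hε0⟩ := (hev.and self_mem_nhdsWithin).exists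
  have hε0 : 0 < ε := hε0
  have hsub : ((dcpN a b x (u + ε • w) : Finset (Fin n)) : Set (Fin n)) ⊆
      {i : Fin n | (Ray x u ∩ H i).Nonempty} := by
    intro i hi
    simp only [dcpN, Finset.coe_filter, Finset.mem_univ, true_and, Set.mem_ofPred_eq] at hi
    by_cases hxi : b i - ⟪x, a i⟫_ℝ = 0
    · apply hself
      rw [hHab i, Set.mem_ofPred_eq]
      linarith
    by_cases hiZ : i ∈ Z
    · exfalso
      have h1 : ⟪u, a i⟫_ℝ = 0 := by simpa [hZ] using hiZ
      rw [inner_add_left, real_inner_smul_left, h1, hw i (hZT hiZ)] at hi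
      have : 0 < ε * ((b i - ⟪x, a i⟫_ℝ) * (b i - ⟪x, a i⟫_ℝ)) :=
        mul_pos hε0 (mul_self_pos.2 hxi)
      linarith
    · have h1 : ⟪u, a i⟫_ℝ ≠ 0 := by simpa [hZ] using hiZ
      have h2 : 0 < (b i - ⟪x, a i⟫_ℝ) * ⟪u, a i⟫_ℝ := by
        refine lt_of_le_of_ne ?_ (mul_ne_zero hxi h1).symm
        by_contra hneg
        exact absurd (hε i (not_le.1 hneg)) (not_lt.2 hi)
      refine ⟨x + ((b i - ⟪x, a i⟫_ℝ) / ⟪u, a i⟫_ℝ) • u, ⟨_, ?_, rfl⟩, ?_⟩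
      · rw [div_eq_mul_inv]
        rcases mul_pos_iff.1 h2 with ⟨p, q⟩ | ⟨p, q⟩
        · exact (mul_pos p (inv_pos.2 q)).le
        · exact (mul_pos_of_neg_of_neg p (inv_lt_zero.2 q)).le
      · rw [hHab i, Set.mem_ofPred_eq, inner_add_left, real_inner_smul_left,
          div_mul_cancel₀ _ h1]
        ring
  have hcard := Set.ncard_le_ncard hsub (Set.toFinite _)
  rw [Set.ncard_coe_finset] at hcard
  have : u + ε • w ∈ dcpU a b x := hkn _ (lt_of_le_of_lt hcard hlt)
  rw [hx] at this
  exact this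
end

section
/- Let d ≥ 1. Parameterize affine hyperplanes in ℝ^d by pairs (v, t) in S^{d−1} × ℝ via H(v,t) = {y ∈ ℝ^d : ⟨y, v⟩ = t}, so that each hyperplane corresponds to exactly the two pairs (v,t) and (−v,−t). Let μ be a probability measure on S^{d−1} × ℝ that is absolutely continuous with respect to the product of the surface measure on S^{d−1} and Lebesgue measure on ℝ, has compact support, and is invariant under the involution (v,t) ↦ (−v,−t). Then there exists a point x ∈ ℝ^d such that for every ray r starting at x, μ({(v,t) : H(v,t) ∩ r ≠ ∅}) ≥ 1/(d+1). -/
open scoped InnerProductSpace ENNReal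
open MeasureTheory

/-- The affine hyperplane in `ℝ^d` with unit normal `v` and offset `t`:
`H(v,t) = {y | ⟪y, v⟫ = t}`. -/
def HypOf {d : ℕ} (v : Metric.sphere (0 : EuclideanSpace ℝ (Fin d)) 1) (t : ℝ) :
    Set (EuclideanSpace ℝ (Fin d)) :=
  {y | ⟪y, (v : EuclideanSpace ℝ (Fin d))⟫_ℝ = t}

/-- Lagrange interpolation of `t ↦ det (1 + t A)`. -/
lemma dcp_det_interp_s1 {E : Type*} [NormedAddCommGroup E] [NormedSpace ℝ E] [FiniteDimensional ℝ E]
    (s : Finset ℝ) (hs : Module.finrank ℝ E < s.card) :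
    ∃ w : ℝ → ℝ, ∑ i ∈ s, w i = 1 ∧ ∀ A : E →L[ℝ] E,
      (ContinuousLinearMap.id ℝ E + (1:ℝ) • A).det =
        ∑ i ∈ s, w i * (ContinuousLinearMap.id ℝ E + i • A).det := by
  classical
  have hinj : Set.InjOn (id : ℝ → ℝ) s := Function.injective_id.injOn
  have key : ∀ p : Polynomial ℝ, p.degree < s.card →
      p.eval 1 = ∑ i ∈ s, (Lagrange.basis s id i).eval 1 * p.eval i := by
    intro p hp
    conv_lhs => rw [Lagrange.eq_interpolate hinj hp]
    rw [Lagrange.interpolate_apply, Polynomial.eval_finsetSum]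
    refine Finset.sum_congr rfl fun i _ => ?_
    simp [mul_comm]
  refine ⟨fun i => (Lagrange.basis s id i).eval 1, ?_, fun A => ?_⟩
  · have := key 1 (by rw [Polynomial.degree_one]; exact_mod_cast (by omega : 0 < s.card))
    simpa using this.symm
  · let b := Module.finBasis ℝ E
    let M := LinearMap.toMatrix b b (A : E →ₗ[ℝ] E)
    let p : Polynomial ℝ := Matrix.det ((Polynomial.X : Polynomial ℝ) • M.map Polynomial.C
      + (1 : Matrix _ _ ℝ).map Polynomial.C)
    have hp : ∀ t : ℝ, p.eval t = (ContinuousLinearMap.id ℝ E + t • A).det := by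
      intro t
      have h1 : (ContinuousLinearMap.id ℝ E + t • A).det =
          LinearMap.det ((LinearMap.id : E →ₗ[ℝ] E) + t • (A : E →ₗ[ℝ] E)) := rfl
      rw [h1, ← LinearMap.det_toMatrix b, map_add, map_smul, LinearMap.toMatrix_id]
      change Polynomial.evalRingHom t (Matrix.det _) = _
      rw [RingHom.map_det]
      congr 1
      ext i j
      by_cases hij : i = j
      · subst hij
        simp [M, Matrix.add_apply]
        ring
      · simp [M, Matrix.add_apply, hij]
        ring
    have hdeg : p.degree < s.card := by
      refine lt_of_le_of_lt Polynomial.degree_le_natDegree ?_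
      have := Polynomial.natDegree_det_X_add_C_le M (1 : Matrix _ _ ℝ)
      rw [Fintype.card_fin] at this
      exact_mod_cast lt_of_le_of_lt this hs
    rw [← hp, key p hdeg]
    exact Finset.sum_congr rfl fun i _ => by rw [hp]

/-- Smooth no-retraction theorem (Milnor and Rogers argument). -/
lemma dcp_no_retraction {E : Type*} [NormedAddCommGroup E] [InnerProductSpace ℝ E]
    [FiniteDimensional ℝ E] [MeasurableSpace E] [BorelSpace E]
    (μ : Measure E) [μ.IsAddHaarMeasure] (R : ℝ) (hR : 0 < R)
    (f : E → E) (hf : ContDiff ℝ 1 f) (hn : ∀ x, ‖f x‖ = R)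
    (hid : ∀ x, ‖x‖ = R → f x = x) : False := by
  classical
  set B : Set E := Metric.closedBall 0 R with hB
  have hBc : IsCompact B := isCompact_closedBall 0 R
  set k : E → E := fun x => f x - x with hk
  have hkC : ContDiff ℝ 1 k := hf.sub contDiff_id
  have hkd : Differentiable ℝ k := hkC.differentiable (by simp)
  have hk'c : Continuous (fderiv ℝ k) := hkC.continuous_fderiv (by simp)
  obtain ⟨C0, hC0⟩ := hBc.exists_bound_of_continuousOn hk'c.continuousOn
  set C : ℝ := max C0 1 with hCdef
  have hC1 : 1 ≤ C := le_max_right _ _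
  have hC : ∀ x ∈ B, ‖fderiv ℝ k x‖ ≤ C := fun x hx => (hC0 x hx).trans (le_max_left _ _)
  have hlip : ∀ x ∈ B, ∀ y ∈ B, ‖k x - k y‖ ≤ C * ‖x - y‖ := fun x hx y hy =>
    (convex_closedBall (0:E) R).norm_image_sub_le_of_norm_fderiv_le
      (fun z _ => hkd z) hC hy hx
  -- extension by zero
  set k' : E → E := fun x => if x ∈ B then k x else 0 with hk'
  have hbd : ∀ x ∈ B, ∀ y ∉ B, ‖k x‖ ≤ C * ‖x - y‖ := by
    intro x hx y hy
    have hx' : ‖x‖ ≤ R := by simpa [hB] using hx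
    have hy' : R < ‖y‖ := by simpa [hB] using hy
    have hyx : ‖y‖ - ‖x‖ ≤ ‖x - y‖ := by
      rw [norm_sub_rev]; exact norm_sub_norm_le y x
    obtain ⟨z, hz, hxz⟩ : ∃ z : E, ‖z‖ = R ∧ ‖x - z‖ ≤ ‖x - y‖ := by
      by_cases h0 : x = 0
      · refine ⟨(R / ‖y‖) • y, ?_, ?_⟩
        · rw [norm_smul, Real.norm_of_nonneg (by positivity)]
          have : ‖y‖ ≠ 0 := by linarith
          field_simp
        · have : ‖y‖ ≠ 0 := by linarith
          rw [h0, zero_sub, norm_neg, norm_smul, Real.norm_of_nonneg (by positivity),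
            div_mul_cancel₀ _ this, zero_sub, norm_neg]
          exact hy'.le
      · have hx0 : 0 < ‖x‖ := norm_pos_iff.2 h0
        refine ⟨(R / ‖x‖) • x, ?_, ?_⟩
        · rw [norm_smul, Real.norm_of_nonneg (by positivity)]
          field_simp
        · have : x - (R / ‖x‖) • x = (1 - R / ‖x‖) • x := by rw [sub_smul, one_smul]
          rw [this, norm_smul, Real.norm_eq_abs]
          have h2 : |1 - R / ‖x‖| = R / ‖x‖ - 1 := by
            rw [abs_sub_comm, abs_of_nonneg]
            rw [sub_nonneg, le_div_iff₀ hx0]; linarith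
          rw [h2, sub_mul, div_mul_cancel₀ _ hx0.ne']
          linarith
    have hkz : k z = 0 := by simp [hk, hid z hz]
    have := hlip x hx z (by simp [hB, hz])
    rw [hkz, sub_zero] at this
    exact this.trans (by gcongr)
  have hlip' : ∀ x y, ‖k' x - k' y‖ ≤ C * ‖x - y‖ := by
    intro x y
    by_cases hx : x ∈ B <;> by_cases hy : y ∈ B <;> simp only [hk', hx, hy, if_true, if_false]
    · exact hlip x hx y hy
    · simpa using hbd x hx y hy
    · rw [zero_sub, norm_neg, norm_sub_rev x y]; exact hbd y hy x hx
    · simp; positivity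
  -- bijectivity for small `t`
  have himg : ∀ t : ℝ, 0 ≤ t → t * C ≤ 1/2 →
      Set.InjOn (fun x => x + t • k x) B ∧ (fun x => x + t • k x) '' B = B := by
    intro t ht htC
    have ht1 : t ≤ 1 := by nlinarith
    refine ⟨?_, ?_⟩
    · intro x hx y hy hxy
      have h1 : x - y = - (t • (k x - k y)) := by
        simp only at hxy
        rw [smul_sub, neg_sub, sub_eq_sub_iff_add_eq_add, hxy, add_comm]
      have h2 : ‖x - y‖ ≤ t * (C * ‖x - y‖) := by
        conv_lhs => rw [h1]
        rw [norm_neg, norm_smul, Real.norm_of_nonneg ht]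
        exact mul_le_mul_of_nonneg_left (hlip x hx y hy) ht
      have h3 : ‖x - y‖ ≤ 0 := by nlinarith [norm_nonneg (x - y)]
      exact sub_eq_zero.1 (norm_le_zero_iff.1 h3)
    · ext y
      constructor
      · rintro ⟨x, hx, rfl⟩
        have hx' : ‖x‖ ≤ R := by simpa [hB] using hx
        have : x + t • k x = (1 - t) • x + t • f x := by
          simp only [hk]; module
        simp only [hB, mem_closedBall_zero_iff, this]
        calc ‖(1 - t) • x + t • f x‖ ≤ ‖(1-t) • x‖ + ‖t • f x‖ := norm_add_le _ _
          _ = (1-t) * ‖x‖ + t * R := by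
            rw [norm_smul, norm_smul, Real.norm_of_nonneg ht, Real.norm_of_nonneg (by linarith), hn]
          _ ≤ R := by nlinarith
      · intro hy
        have hcontr : ContractingWith (1/2) (fun x => y - t • k' x) := by
          refine ⟨by norm_num, LipschitzWith.of_dist_le_mul fun x z => ?_⟩
          rw [dist_eq_norm, dist_eq_norm]
          have : y - t • k' x - (y - t • k' z) = - (t • (k' x - k' z)) := by module
          rw [this, norm_neg, norm_smul, Real.norm_of_nonneg ht]
          have h1 := mul_le_mul_of_nonneg_left (hlip' x z) ht
          have h2 : ((1/2 : NNReal) : ℝ) = 1/2 := by norm_num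
          rw [h2]
          nlinarith [norm_nonneg (x - z)]
        have hfix : y - t • k' (hcontr.fixedPoint) = hcontr.fixedPoint :=
          hcontr.fixedPoint_isFixedPt
        set x := hcontr.fixedPoint
        by_cases hx : x ∈ B
        · refine ⟨x, hx, ?_⟩
          simp only [hk', hx, if_true] at hfix
          exact (sub_eq_iff_eq_add.1 hfix).symm
        · exfalso
          simp only [hk', hx, if_false, smul_zero, sub_zero] at hfix
          exact hx (hfix ▸ hy)
  -- positivity of determinant
  obtain ⟨δ, hδ, hdet⟩ : ∃ δ > 0, ∀ A : E →L[ℝ] E, ‖A‖ < δ →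
      0 < (ContinuousLinearMap.id ℝ E + A).det := by
    have hc : ContinuousAt (fun A : E →L[ℝ] E => (ContinuousLinearMap.id ℝ E + A).det) 0 :=
      (ContinuousLinearMap.continuous_det.comp (continuous_const.add continuous_id)).continuousAt
    have h0 : 0 < (ContinuousLinearMap.id ℝ E + (0 : E →L[ℝ] E)).det := by
      rw [add_zero]
      have : (ContinuousLinearMap.id ℝ E).det = 1 := LinearMap.det_id
      rw [this]; norm_num
    obtain ⟨δ, hδ, h⟩ := Metric.eventually_nhds_iff.1 (hc.eventually (lt_mem_nhds h0))
    exact ⟨δ, hδ, fun A hA => h (by simpa using hA)⟩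
  have hint : ∀ t : ℝ, 0 ≤ t → t * C ≤ 1/2 → t * C < δ →
      ∫ x in B, (ContinuousLinearMap.id ℝ E + t • fderiv ℝ k x).det ∂μ = μ.real B := by
    intro t ht h1 h2
    obtain ⟨hi, him⟩ := himg t ht h1
    have hcv := integral_image_eq_integral_abs_det_fderiv_smul μ
      (s := B) (f := fun x => x + t • k x)
      (f' := fun x => ContinuousLinearMap.id ℝ E + t • fderiv ℝ k x)
      hBc.measurableSet
      (fun x _ => ((hasFDerivAt_id x).add
        ((hkd x).hasFDerivAt.const_smul t)).hasFDerivWithinAt) hi (fun _ => (1:ℝ))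
    rw [him] at hcv
    simp only [integral_const, smul_eq_mul, mul_one] at hcv
    rw [measureReal_restrict_apply_univ] at hcv
    rw [hcv]
    refine setIntegral_congr_fun hBc.measurableSet fun x hx => ?_
    refine (abs_of_pos (hdet _ ?_)).symm
    rw [norm_smul, Real.norm_of_nonneg ht]
    exact lt_of_le_of_lt (mul_le_mul_of_nonneg_left (hC x hx) ht) h2
  -- nodes
  set n := Module.finrank ℝ E
  obtain ⟨ε, hε, hε1, hε2⟩ : ∃ ε > 0, ε * C ≤ 1/2 ∧ ε * C < δ := by
    have hC0 : 0 < C := by linarith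
    refine ⟨min (1/2) (δ/2) / C, by positivity, ?_, ?_⟩
    · rw [div_mul_cancel₀ _ hC0.ne']; exact min_le_left _ _
    · rw [div_mul_cancel₀ _ hC0.ne']; exact (min_le_right _ _).trans_lt (by linarith)
  obtain ⟨s, hsub, hcard⟩ := (Set.Icc_infinite hε).exists_subset_card_eq (n+1)
  obtain ⟨w, hw1, hw⟩ := dcp_det_interp_s1 (E := E) s (by omega)
  have hcont : ∀ t : ℝ, Continuous fun x =>
      (ContinuousLinearMap.id ℝ E + t • fderiv ℝ k x).det := fun t =>
    ContinuousLinearMap.continuous_det.comp (continuous_const.add (hk'c.const_smul t))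
  have hfinal : ∫ x in B, (ContinuousLinearMap.id ℝ E + (1:ℝ) • fderiv ℝ k x).det ∂μ
      = μ.real B := by
    simp_rw [hw]
    rw [integral_finsetSum]
    · simp_rw [integral_const_mul]
      rw [Finset.sum_congr rfl (g := fun i => w i * μ.real B), ← Finset.sum_mul, hw1, one_mul]
      intro i hi
      have hi' := hsub hi
      have hCp : 0 ≤ C := by linarith
      rw [hint i hi'.1 ((mul_le_mul_of_nonneg_right hi'.2 hCp).trans hε1)
        ((mul_le_mul_of_nonneg_right hi'.2 hCp).trans_lt hε2)]
    · intro i _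
      exact (((hcont i).continuousOn.integrableOn_compact hBc)).const_mul _
  have hzero : ∀ x, (ContinuousLinearMap.id ℝ E + (1:ℝ) • fderiv ℝ k x).det = 0 := by
    intro x
    have hfd : HasFDerivAt f (fderiv ℝ f x) x := ((hf.differentiable (by simp)) x).hasFDerivAt
    have h1 : ContinuousLinearMap.id ℝ E + (1:ℝ) • fderiv ℝ k x = fderiv ℝ f x := by
      have : fderiv ℝ k x = fderiv ℝ f x - ContinuousLinearMap.id ℝ E :=
        (hfd.sub (hasFDerivAt_id x)).fderiv
      rw [this]; simp
    rw [h1]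
    have horth : ∀ v, ⟪f x, fderiv ℝ f x v⟫_ℝ = 0 := by
      intro v
      have h2 := hfd.norm_sq
      have h3 : (fun y => ‖f y‖ ^ 2) = fun _ => R ^ 2 := by ext y; rw [hn]
      rw [h3] at h2
      have h4 := h2.unique (hasFDerivAt_const (R^2) x)
      have h5 := congrArg (fun T : E →L[ℝ] ℝ => T v) h4
      simpa using h5
    by_contra hne
    have hsurj : Function.Surjective (fderiv ℝ f x) := by
      have : IsUnit (LinearMap.det (fderiv ℝ f x : E →ₗ[ℝ] E)) := isUnit_iff_ne_zero.2 hne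
      intro y
      obtain ⟨v, hv⟩ := (LinearMap.equivOfIsUnitDet this).surjective y
      exact ⟨v, by simpa using hv⟩
    obtain ⟨v, hv⟩ := hsurj (f x)
    have := horth v
    rw [hv, real_inner_self_eq_norm_sq, hn] at this
    exact hR.ne' (by simpa using this)
  simp_rw [hzero] at hfinal
  simp only [integral_zero] at hfinal
  have : 0 < μ.real B := by
    refine ENNReal.toReal_pos ?_ hBc.measure_lt_top.ne
    exact (Metric.measure_closedBall_pos μ 0 hR).ne'
  linarith

/-- The (closed) set of hyperplanes weakly on the `u`-side of `x`. -/
def dcpC {d : ℕ} (x u : EuclideanSpace ℝ (Fin d)) :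
    Set (Metric.sphere (0 : EuclideanSpace ℝ (Fin d)) 1 × ℝ) :=
  {p | 0 ≤ (p.2 - ⟪x, (p.1 : EuclideanSpace ℝ (Fin d))⟫_ℝ) *
    ⟪u, (p.1 : EuclideanSpace ℝ (Fin d))⟫_ℝ}

/-- Continuity from above for sublevel sets of a measurable function. -/
lemma dcp_exists_eps {α : Type*} [MeasurableSpace α] (μ : Measure α) [IsFiniteMeasure μ]
    (g : α → ℝ) (hg : Measurable g) (c : ℝ≥0∞) (h : μ {p | g p ≤ 0} < c) :
    ∃ ε > 0, μ {p | g p ≤ ε} < c := by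
  have hI : {p | g p ≤ 0} = ⋂ n : ℕ, {p | g p ≤ 1 / ((n : ℝ) + 1)} := by
    ext p
    simp only [Set.mem_ofPred_eq, Set.mem_iInter]
    constructor
    · intro hp n
      exact hp.trans (by positivity)
    · intro hp
      exact ge_of_tendsto' tendsto_one_div_add_atTop_nhds_zero_nat hp
  have ht := tendsto_measure_iInter_atTop (μ := μ)
    (s := fun n : ℕ => {p | g p ≤ 1 / ((n : ℝ) + 1)})
    (fun n => (measurableSet_le hg measurable_const).nullMeasurableSet)
    (by
      intro m n hmn p hp
      simp only [Set.mem_ofPred_eq] at hp ⊢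
      refine hp.trans (one_div_le_one_div_of_le (by positivity) ?_)
      have : (m : ℝ) ≤ n := by exact_mod_cast hmn
      linarith)
    ⟨0, measure_ne_top _ _⟩
  rw [← hI] at ht
  obtain ⟨n, hn⟩ := (ht.eventually (gt_mem_nhds h)).exists
  exact ⟨1 / ((n : ℝ) + 1), by positivity, hn⟩

open scoped Pointwise in
lemma dcp_null {d : ℕ} (μ : Measure (Metric.sphere (0 : EuclideanSpace ℝ (Fin d)) 1 × ℝ))
    (hac : μ ≪ ((volume : Measure (EuclideanSpace ℝ (Fin d))).toSphere.prod volume))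
    (u : EuclideanSpace ℝ (Fin d)) (hu : u ≠ 0) :
    μ {p | ⟪u, (p.1 : EuclideanSpace ℝ (Fin d))⟫_ℝ = 0} = 0 := by
  apply hac
  set S : Set (Metric.sphere (0 : EuclideanSpace ℝ (Fin d)) 1) :=
    {v | ⟪u, (v : EuclideanSpace ℝ (Fin d))⟫_ℝ = 0} with hS
  have hSm : MeasurableSet S :=
    (isClosed_eq (by fun_prop) continuous_const).measurableSet
  have hSn : (volume : Measure (EuclideanSpace ℝ (Fin d))).toSphere S = 0 := by
    rw [Measure.toSphere_apply' _ hSm]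
    have hsub : Set.Ioo (0:ℝ) 1 • ((↑) '' S : Set (EuclideanSpace ℝ (Fin d))) ⊆
        (LinearMap.ker (innerSL ℝ u : EuclideanSpace ℝ (Fin d) →ₗ[ℝ] ℝ) :
          Set (EuclideanSpace ℝ (Fin d))) := by
      rintro _ ⟨a, ha, _, ⟨v, hv, rfl⟩, rfl⟩
      have hv' : ⟪u, (v : EuclideanSpace ℝ (Fin d))⟫_ℝ = 0 := hv
      simp [hv']
    have hne : LinearMap.ker (innerSL ℝ u : EuclideanSpace ℝ (Fin d) →ₗ[ℝ] ℝ) ≠ ⊤ := by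
      intro h
      have : u ∈ LinearMap.ker (innerSL ℝ u : EuclideanSpace ℝ (Fin d) →ₗ[ℝ] ℝ) := by
        rw [h]; trivial
      simp at this
      exact hu this
    rw [measure_mono_null hsub (Measure.addHaar_submodule volume _ hne), mul_zero]
  have : {p : Metric.sphere (0 : EuclideanSpace ℝ (Fin d)) 1 × ℝ |
      ⟪u, (p.1 : EuclideanSpace ℝ (Fin d))⟫_ℝ = 0} = S ×ˢ Set.univ := by
    ext p; simp [hS]
  rw [this, Measure.prod_prod, hSn, zero_mul]

lemma dcp_norm_inner {d : ℕ} (y : EuclideanSpace ℝ (Fin d))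
    (v : Metric.sphere (0 : EuclideanSpace ℝ (Fin d)) 1) :
    |⟪y, (v : EuclideanSpace ℝ (Fin d))⟫_ℝ| ≤ ‖y‖ := by
  have := abs_real_inner_le_norm y (v : EuclideanSpace ℝ (Fin d))
  rwa [norm_eq_of_mem_sphere v, mul_one] at this

/-- Badness is an open condition in the base point. -/
lemma dcp_open_s1 {d : ℕ} (μ : Measure (Metric.sphere (0 : EuclideanSpace ℝ (Fin d)) 1 × ℝ))
    [IsFiniteMeasure μ] (c : ℝ≥0∞) (x u : EuclideanSpace ℝ (Fin d))
    (h : μ (dcpC x u) < c) : ∀ᶠ y in nhds x, μ (dcpC y u) < c := by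
  have hm : Measurable fun p : Metric.sphere (0 : EuclideanSpace ℝ (Fin d)) 1 × ℝ =>
      -((p.2 - ⟪x, (p.1 : EuclideanSpace ℝ (Fin d))⟫_ℝ) *
        ⟪u, (p.1 : EuclideanSpace ℝ (Fin d))⟫_ℝ) :=
    Continuous.measurable (by fun_prop)
  have h' : μ {p | -((p.2 - ⟪x, (p.1 : EuclideanSpace ℝ (Fin d))⟫_ℝ) *
        ⟪u, (p.1 : EuclideanSpace ℝ (Fin d))⟫_ℝ) ≤ 0} < c := by
    simpa [dcpC, neg_nonpos] using h
  obtain ⟨ε, hε, hlt⟩ := dcp_exists_eps μ _ hm c h'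
  have hpos : 0 < ε / (‖u‖ + 1) := by positivity
  filter_upwards [Metric.ball_mem_nhds x hpos] with y hy
  refine lt_of_le_of_lt (measure_mono ?_) hlt
  intro p hp
  simp only [dcpC, Set.mem_ofPred_eq] at hp ⊢
  have h1 : |⟪y - x, (p.1 : EuclideanSpace ℝ (Fin d))⟫_ℝ *
      ⟪u, (p.1 : EuclideanSpace ℝ (Fin d))⟫_ℝ| ≤ ε := by
    rw [abs_mul]
    have hy' : ‖y - x‖ ≤ ε / (‖u‖ + 1) := by
      rw [← dist_eq_norm]; exact (Metric.mem_ball.1 hy).le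
    calc _ ≤ (ε / (‖u‖ + 1)) * (‖u‖ + 1) :=
          mul_le_mul ((dcp_norm_inner _ _).trans hy') ((dcp_norm_inner _ _).trans (by linarith))
            (abs_nonneg _) hpos.le
      _ = ε := div_mul_cancel₀ _ (by positivity)
  rw [inner_sub_left] at h1
  have := (abs_le.1 h1).1
  nlinarith

/-- The cone of bad directions does not contain the origin in its convex hull. -/
lemma dcp_zero_notMem_s1 {d : ℕ}
    (μ : Measure (Metric.sphere (0 : EuclideanSpace ℝ (Fin d)) 1 × ℝ))
    [IsProbabilityMeasure μ] (x : EuclideanSpace ℝ (Fin d)) :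
    (0 : EuclideanSpace ℝ (Fin d)) ∉
      convexHull ℝ {u | μ (dcpC x u) < 1 / ((d : ℝ≥0∞) + 1)} := by
  intro h0
  rw [convexHull_eq_union] at h0
  simp only [Set.mem_iUnion] at h0
  obtain ⟨s, hs, hind, h0⟩ := h0
  have hcard : s.card ≤ d + 1 := by
    have h1 := hind.card_le_finrank_succ
    have h2 := Submodule.finrank_le
      (vectorSpan ℝ (Set.range ((↑) : s → EuclideanSpace ℝ (Fin d))))
    rw [finrank_euclideanSpace_fin] at h2
    rw [Fintype.card_coe] at h1
    omega
  have hne : s.Nonempty := by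
    rw [Finset.nonempty_iff_ne_empty]
    rintro rfl
    simp at h0
  have hlt : μ (⋃ u ∈ s, dcpC x u) < 1 := by
    calc μ (⋃ u ∈ s, dcpC x u) ≤ ∑ u ∈ s, μ (dcpC x u) := measure_biUnion_finset_le _ _
      _ < ∑ u ∈ s, 1 / ((d : ℝ≥0∞) + 1) :=
          ENNReal.sum_lt_sum_of_nonempty hne fun u hu => hs hu
      _ = s.card * (1 / ((d : ℝ≥0∞) + 1)) := by rw [Finset.sum_const, nsmul_eq_mul]
      _ ≤ ((d : ℝ≥0∞) + 1) * (1 / ((d : ℝ≥0∞) + 1)) := by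
          gcongr
          exact_mod_cast hcard
      _ = 1 := by
          rw [one_div]
          exact ENNReal.mul_inv_cancel (by simp) (by finiteness)
  have hex : ∃ p, p ∉ ⋃ u ∈ s, dcpC x u := by
    by_contra hcon
    push Not at hcon
    rw [Set.eq_univ_of_forall hcon, measure_univ] at hlt
    exact lt_irrefl _ hlt
  obtain ⟨p, hp⟩ := hex
  simp only [Set.mem_iUnion, not_exists, dcpC, Set.mem_ofPred_eq, not_le] at hp
  -- the half space is convex
  have hconv : Convex ℝ {u : EuclideanSpace ℝ (Fin d) |
      (p.2 - ⟪x, (p.1 : EuclideanSpace ℝ (Fin d))⟫_ℝ) *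
        ⟪u, (p.1 : EuclideanSpace ℝ (Fin d))⟫_ℝ < 0} := by
    refine convex_halfSpace_lt ⟨fun a b => ?_, fun c a => ?_⟩ 0
    · rw [inner_add_left, mul_add]
    · rw [real_inner_smul_left, smul_eq_mul]; ring
  have hmem := hconv.convexHull_subset_iff.2
    (fun u hu => Set.mem_ofPred_eq.symm ▸ hp u hu) h0
  rw [Set.mem_ofPred_eq, inner_zero_left, mul_zero] at hmem
  exact lt_irrefl _ hmem

/-- Uniform smallness of neighbourhoods of great subspheres. -/
lemma dcp_uniform {d : ℕ} (μ : Measure (Metric.sphere (0 : EuclideanSpace ℝ (Fin d)) 1 × ℝ))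
    [IsFiniteMeasure μ]
    (hac : μ ≪ ((volume : Measure (EuclideanSpace ℝ (Fin d))).toSphere.prod volume))
    (c : ℝ≥0∞) (hc : 0 < c) :
    ∃ ε > 0, ∀ e : EuclideanSpace ℝ (Fin d), ‖e‖ = 1 →
      μ {p | |⟪e, (p.1 : EuclideanSpace ℝ (Fin d))⟫_ℝ| ≤ ε} < c := by
  have hcomp : IsCompact (Metric.sphere (0 : EuclideanSpace ℝ (Fin d)) 1) := isCompact_sphere _ _
  have := hcomp.induction_on (p := fun s => ∃ ε > 0, ∀ e ∈ s,
      μ {p | |⟪e, (p.1 : EuclideanSpace ℝ (Fin d))⟫_ℝ| ≤ ε} < c)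
    ⟨1, one_pos, by simp⟩
    (fun s t hst ⟨ε, hε, h⟩ => ⟨ε, hε, fun e he => h e (hst he)⟩)
    (by
      rintro s t ⟨ε, hε, h⟩ ⟨ε', hε', h'⟩
      refine ⟨min ε ε', lt_min hε hε', ?_⟩
      rintro e (he | he)
      · refine lt_of_le_of_lt (measure_mono fun p hp => ?_) (h e he)
        simp only [Set.mem_ofPred_eq] at hp ⊢
        exact hp.trans (min_le_left _ _)
      · refine lt_of_le_of_lt (measure_mono fun p hp => ?_) (h' e he)
        simp only [Set.mem_ofPred_eq] at hp ⊢
        exact hp.trans (min_le_right _ _))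
    (by
      intro e he
      have he0 : e ≠ 0 := by
        rintro rfl
        simp at he
      have hm : Measurable fun p : Metric.sphere (0 : EuclideanSpace ℝ (Fin d)) 1 × ℝ =>
          |⟪e, (p.1 : EuclideanSpace ℝ (Fin d))⟫_ℝ| := Continuous.measurable (by fun_prop)
      obtain ⟨ε, hε, h⟩ := dcp_exists_eps μ _ hm c (by
        simp only [abs_nonpos_iff]
        rw [dcp_null μ hac e he0]
        exact hc)
      refine ⟨Metric.ball e (ε / 2),
        mem_nhdsWithin_of_mem_nhds (Metric.ball_mem_nhds e (by positivity)),
        ε / 2, by positivity, fun e' he' => ?_⟩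
      refine lt_of_le_of_lt (measure_mono fun p hp => ?_) h
      simp only [Set.mem_ofPred_eq] at hp ⊢
      have h1 := dcp_norm_inner (e - e') p.1
      have h2 : ‖e - e'‖ ≤ ε / 2 := by
        rw [← dist_eq_norm, dist_comm]; exact (Metric.mem_ball.1 he').le
      rw [inner_sub_left] at h1
      rw [abs_le] at *
      constructor <;> linarith [h1.1, h1.2, hp.1, hp.2])
  obtain ⟨ε, hε, h⟩ := this
  exact ⟨ε, hε, fun e he => h e (by simpa using he)⟩

/-- Far away, the outward direction is bad. -/
lemma dcp_far {d : ℕ} (μ : Measure (Metric.sphere (0 : EuclideanSpace ℝ (Fin d)) 1 × ℝ))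
    [IsFiniteMeasure μ]
    (hac : μ ≪ ((volume : Measure (EuclideanSpace ℝ (Fin d))).toSphere.prod volume))
    (hsupp : ∃ K : Set (Metric.sphere (0 : EuclideanSpace ℝ (Fin d)) 1 × ℝ),
      IsCompact K ∧ μ Kᶜ = 0)
    (c : ℝ≥0∞) (hc : 0 < c) :
    ∃ R > 0, ∀ x : EuclideanSpace ℝ (Fin d), R ≤ ‖x‖ → μ (dcpC x x) < c := by
  obtain ⟨K, hK, hK0⟩ := hsupp
  obtain ⟨r0, hr0⟩ := hK.exists_bound_of_continuousOn (f := Prod.snd) continuous_snd.continuousOn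
  obtain ⟨ε, hε, h⟩ := dcp_uniform μ hac c hc
  set r := max r0 1 with hr
  have hrpos : 0 < r := lt_of_lt_of_le one_pos (le_max_right _ _)
  refine ⟨r / ε, by positivity, fun x hx => ?_⟩
  have hxpos : 0 < ‖x‖ := lt_of_lt_of_le (by positivity) hx
  have hrx : r ≤ ‖x‖ * ε := (div_le_iff₀ hε).1 hx
  have hsub : dcpC x x ⊆ {p | |⟪(‖x‖⁻¹ : ℝ) • x, (p.1 : EuclideanSpace ℝ (Fin d))⟫_ℝ| ≤ ε}
      ∪ Kᶜ := by
    intro p hp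
    by_cases hpK : p ∈ K
    · left
      have ht : |p.2| ≤ r := (hr0 p hpK).trans (le_max_left _ _)
      simp only [dcpC, Set.mem_ofPred_eq] at hp ⊢
      rw [real_inner_smul_left]
      set a := ⟪x, (p.1 : EuclideanSpace ℝ (Fin d))⟫_ℝ
      have ha : |a| ≤ r := by
        by_contra hcon
        push Not at hcon
        have h1 : |a| * |a| ≤ p.2 * a := by rw [abs_mul_abs_self]; linarith
        have h2 : p.2 * a ≤ |p.2| * |a| := by rw [← abs_mul]; exact le_abs_self _
        nlinarith
      rw [abs_mul, abs_of_pos (inv_pos.2 hxpos), inv_mul_le_iff₀ hxpos]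
      linarith
    · right; exact hpK
  refine lt_of_le_of_lt ((measure_mono hsub).trans (measure_union_le _ _)) ?_
  rw [hK0, add_zero]
  apply h
  rw [norm_smul, norm_inv, norm_norm, inv_mul_cancel₀ hxpos.ne']

lemma dcp_le {d : ℕ} (μ : Measure (Metric.sphere (0 : EuclideanSpace ℝ (Fin d)) 1 × ℝ))
    (hac : μ ≪ ((volume : Measure (EuclideanSpace ℝ (Fin d))).toSphere.prod volume))
    (x u : EuclideanSpace ℝ (Fin d)) (hu : u ≠ 0) :
    μ (dcpC x u) ≤ μ {p | (HypOf p.1 p.2 ∩ Ray x u).Nonempty} := by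
  have hsub : dcpC x u ⊆ {p | (HypOf p.1 p.2 ∩ Ray x u).Nonempty} ∪
      {p | ⟪u, (p.1 : EuclideanSpace ℝ (Fin d))⟫_ℝ = 0} := by
    intro p hp
    by_cases h0 : ⟪u, (p.1 : EuclideanSpace ℝ (Fin d))⟫_ℝ = 0
    · right; exact h0
    · left
      simp only [dcpC, Set.mem_ofPred_eq] at hp
      refine ⟨x + ((p.2 - ⟪x, (p.1 : EuclideanSpace ℝ (Fin d))⟫_ℝ) /
        ⟪u, (p.1 : EuclideanSpace ℝ (Fin d))⟫_ℝ) • u, ?_, _, ?_, rfl⟩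
      · simp only [HypOf, Set.mem_ofPred_eq]
        rw [inner_add_left, real_inner_smul_left, div_mul_cancel₀ _ h0]
        ring
      · rw [← mul_div_mul_right _ _ h0]
        exact div_nonneg hp (mul_self_nonneg _)
  refine (measure_mono hsub).trans ((measure_union_le _ _).trans ?_)
  rw [dcp_null μ hac u hu, add_zero]

/-- The dual central point theorem for measures: if `μ` is a compactly supported
probability measure on the space `S^{d-1} × ℝ` of (parameterized) affine hyperplanes
in `ℝ^d`, absolutely continuous with respect to the product of the surface measure on
the sphere and Lebesgue measure, and invariant under `(v,t) ↦ (-v,-t)`, then there is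
a point `x` such that every ray starting at `x` meets a set of hyperplanes of
`μ`-measure at least `1/(d+1)`. -/
theorem dual_central_point_measure (d : ℕ) (hd : 1 ≤ d)
    (μ : Measure (Metric.sphere (0 : EuclideanSpace ℝ (Fin d)) 1 × ℝ))
    [IsProbabilityMeasure μ]
    (hac : μ ≪ ((volume : Measure (EuclideanSpace ℝ (Fin d))).toSphere.prod volume))
    (hinv : μ.map (fun p => (-p.1, -p.2)) = μ)
    (hsupp : ∃ K : Set (Metric.sphere (0 : EuclideanSpace ℝ (Fin d)) 1 × ℝ),
      IsCompact K ∧ μ Kᶜ = 0) :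
    ∃ x : EuclideanSpace ℝ (Fin d), ∀ u : EuclideanSpace ℝ (Fin d), ‖u‖ = 1 →
      1 / ((d : ℝ≥0∞) + 1) ≤ μ {p | (HypOf p.1 p.2 ∩ Ray x u).Nonempty} := by
  by_contra hcon
  push Not at hcon
  set c : ℝ≥0∞ := 1 / ((d : ℝ≥0∞) + 1) with hcdef
  have hc : 0 < c := by
    rw [hcdef, one_div]
    exact ENNReal.inv_pos.2 (by finiteness)
  set U : EuclideanSpace ℝ (Fin d) → Set (EuclideanSpace ℝ (Fin d)) :=
    fun x => convexHull ℝ {u | μ (dcpC x u) < c} with hU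
  have hU0 : ∀ x, (0 : EuclideanSpace ℝ (Fin d)) ∉ U x := fun x => dcp_zero_notMem_s1 μ x
  have hUc : ∀ x, Convex ℝ (U x) := fun x => convex_convexHull ℝ _
  obtain ⟨g, hg⟩ := exists_contMDiffMap_forall_mem_convex_of_local_const
    (n := 1) (modelWithCornersSelf ℝ (EuclideanSpace ℝ (Fin d))) hUc (by
      intro x
      obtain ⟨u, hu1, hu⟩ := hcon x
      have hu0 : u ≠ 0 := by
        rintro rfl
        simp at hu1
      refine ⟨u, ?_⟩
      filter_upwards [dcp_open_s1 μ c x u ((dcp_le μ hac x u hu0).trans_lt hu)] with y hy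
      exact subset_convexHull ℝ _ hy)
  have hgC : ContDiff ℝ 1 (g : EuclideanSpace ℝ (Fin d) → EuclideanSpace ℝ (Fin d)) :=
    contMDiff_iff_contDiff.1 g.contMDiff
  obtain ⟨R, hR, hfar⟩ := dcp_far μ hac hsupp c hc
  let b : ContDiffBump (0 : EuclideanSpace ℝ (Fin d)) := ⟨R, R + 1, hR, by linarith⟩
  set h : EuclideanSpace ℝ (Fin d) → EuclideanSpace ℝ (Fin d) :=
    fun x => b x • g x + (1 - b x) • x with hh
  have hhC : ContDiff ℝ 1 h :=
    (b.contDiff.smul hgC).add ((contDiff_const.sub b.contDiff).smul contDiff_id)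
  have hh0 : ∀ x, h x ≠ 0 := by
    intro x hx
    by_cases hxR : ‖x‖ ≤ R
    · have hb : b x = 1 := b.one_of_mem_closedBall (by simpa using hxR)
      simp only [hh, hb, one_smul, sub_self, zero_smul, add_zero] at hx
      exact hU0 x (hx ▸ hg x)
    · push Not at hxR
      have hxU : x ∈ U x := subset_convexHull ℝ _ (hfar x hxR.le)
      have := hUc x (hg x) hxU b.nonneg (sub_nonneg.2 b.le_one) (by ring : b x + (1 - b x) = 1)
      exact hU0 x (hx ▸ this)
  have hR1 : 0 < R + 1 := by linarith
  refine dcp_no_retraction (volume : Measure (EuclideanSpace ℝ (Fin d))) (R + 1) hR1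
    (fun x => ((R + 1) * ‖h x‖⁻¹) • h x) ?_ ?_ ?_
  · exact (contDiff_const.mul ((hhC.norm ℝ hh0).inv fun x => norm_ne_zero_iff.2 (hh0 x))).smul hhC
  · intro x
    have := norm_pos_iff.2 (hh0 x)
    rw [norm_smul, Real.norm_of_nonneg (by positivity), mul_assoc, inv_mul_cancel₀ this.ne',
      mul_one]
  · intro x hx
    have hb : b x = 0 := b.zero_of_le_dist (by simp [b, hx])
    have hhx : h x = x := by simp [hh, hb]
    rw [hhx, hx, mul_inv_cancel₀ hR1.ne', one_smul]
end

section
/- Let n ≥ 1 and consider a family of 3n straight lines in general position in the plane ℝ² (no two parallel, no three concurrent). Then the family can be partitioned into n triples such that the n triangles formed by the triples (each triangle being the convex hull of the three pairwise intersection points of the lines of a triple) have a point in common. -/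
open scoped InnerProductSpace

/-- A line in the plane `ℝ²`: the solution set of one nontrivial linear equation. -/
def IsLine (l : Set (EuclideanSpace ℝ (Fin 2))) : Prop :=
  ∃ (v : EuclideanSpace ℝ (Fin 2)) (c : ℝ), v ≠ 0 ∧ l = {y | ⟪y, v⟫_ℝ = c}

/-- Order statistic: a continuous function giving the `n`-th smallest value of the lines in `U`. -/
lemma exists_orderStat {ι : Type*} [DecidableEq ι] (a b : ι → ℝ) (n : ℕ) (hn : 1 ≤ n)
    (U : Finset ι) (hU : n ≤ U.card) :
    ∃ q : ℝ → ℝ, Continuous q ∧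
      (∀ x v, q x ≤ v ↔ n ≤ (U.filter (fun i => a i * x + b i ≤ v)).card) ∧
      (∀ x v, q x < v ↔ n ≤ (U.filter (fun i => a i * x + b i < v)).card) := by
  have hne : ((Finset.powersetCard n U).attach).Nonempty := by
    rw [Finset.attach_nonempty_iff]
    exact Finset.powersetCard_nonempty.2 hU
  have hS : ∀ S : {S // S ∈ Finset.powersetCard n U}, S.1.Nonempty := by
    intro S
    have := (Finset.mem_powersetCard.1 S.2).2
    rw [← Finset.card_pos]; omega
  refine ⟨fun x => (Finset.powersetCard n U).attach.inf' hne
    (fun S => S.1.sup' (hS S) (fun i => a i * x + b i)), ?_, ?_, ?_⟩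
  · apply Continuous.finset_inf'_apply
    intro S _
    apply Continuous.finset_sup'_apply
    intro i _
    fun_prop
  · intro x v
    simp only [Finset.inf'_le_iff, Finset.sup'_le_iff]
    constructor
    · rintro ⟨S, -, h⟩
      obtain ⟨h1, h2⟩ := Finset.mem_powersetCard.1 S.2
      rw [← h2]
      apply Finset.card_le_card
      intro i hi
      exact Finset.mem_filter.2 ⟨h1 hi, h i hi⟩
    · intro h
      obtain ⟨S, h1, h2⟩ := Finset.exists_subset_card_eq h
      refine ⟨⟨S, Finset.mem_powersetCard.2 ⟨h1.trans (Finset.filter_subset _ _), h2⟩⟩,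
        Finset.mem_attach _ _, ?_⟩
      intro i hi
      exact (Finset.mem_filter.1 (h1 hi)).2
  · intro x v
    simp only [Finset.inf'_lt_iff, Finset.sup'_lt_iff]
    constructor
    · rintro ⟨S, -, h⟩
      obtain ⟨h1, h2⟩ := Finset.mem_powersetCard.1 S.2
      rw [← h2]
      apply Finset.card_le_card
      intro i hi
      exact Finset.mem_filter.2 ⟨h1 hi, h i hi⟩
    · intro h
      obtain ⟨S, h1, h2⟩ := Finset.exists_subset_card_eq h
      refine ⟨⟨S, Finset.mem_powersetCard.2 ⟨h1.trans (Finset.filter_subset _ _), h2⟩⟩,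
        Finset.mem_attach _ _, ?_⟩
      intro i hi
      exact (Finset.mem_filter.1 (h1 hi)).2

/-- The tangency case: near a crossing of two lines, one order statistic stays below the other. -/
lemma tangency {ι : Type*} [DecidableEq ι] [Fintype ι] (a b : ι → ℝ) (n : ℕ)
    (ha : Function.Injective a)
    (U W : Finset ι) (f g : ℝ → ℝ)
    (hf : ∀ x v, f x ≤ v ↔ n ≤ (U.filter (fun i => a i * x + b i ≤ v)).card)
    (hg : ∀ x v, g x < v ↔ n ≤ (W.filter (fun i => a i * x + b i < v)).card)
    (x₀ v : ℝ) (i j : ι) (hij : i ≠ j) (hiU : i ∈ U) (hjU : j ∈ U)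
    (hi : a i * x₀ + b i = v) (hj : a j * x₀ + b j = v)
    (hk : ∀ k, k ≠ i → k ≠ j → a k * x₀ + b k ≠ v)
    (hUc : n ≤ (U.filter (fun k => a k * x₀ + b k < v)).card + 1)
    (hWc : (W.filter (fun k => a k * x₀ + b k < v)).card + 2 ≤ n) :
    ∀ᶠ x in nhds x₀, x ≠ x₀ → f x < g x := by
  have hcont : ∀ k, Continuous (fun x : ℝ => a k * x + b k) := fun k => by fun_prop
  have hlt : ∀ k l, a k * x₀ + b k < a l * x₀ + b l →
      ∀ᶠ x in nhds x₀, a k * x + b k < a l * x + b l := fun k l h =>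
    (hcont k).continuousAt.eventually_lt (hcont l).continuousAt h
  have hall : ∀ᶠ x in nhds x₀, ∀ k l, a k * x₀ + b k < a l * x₀ + b l →
      a k * x + b k < a l * x + b l := by
    rw [Filter.eventually_all]; intro k
    rw [Filter.eventually_all]; intro l
    by_cases h : a k * x₀ + b k < a l * x₀ + b l
    · filter_upwards [hlt k l h] with x hx _ using hx
    · exact Filter.Eventually.of_forall fun x h' => absurd h' h
  filter_upwards [hall] with x hx hxne
  -- a local form, after naming the lower line
  have key : ∀ i j : ι, i ≠ j → i ∈ U → a i * x₀ + b i = v → a j * x₀ + b j = v →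
      (∀ k, k ≠ i → k ≠ j → a k * x₀ + b k ≠ v) →
      a i * x + b i < a j * x + b j → f x < g x := by
    intro i j hij hiU hi hj hk hlt
    have h1 : f x ≤ a i * x + b i := by
      rw [hf]
      have : insert i (U.filter (fun k => a k * x₀ + b k < v)) ⊆
          U.filter (fun k => a k * x + b k ≤ a i * x + b i) := by
        intro k hk'
        rcases Finset.mem_insert.1 hk' with rfl | hk'
        · exact Finset.mem_filter.2 ⟨hiU, le_rfl⟩
        · obtain ⟨h1, h2⟩ := Finset.mem_filter.1 hk'
          exact Finset.mem_filter.2 ⟨h1, (hx k i (by linarith)).le⟩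
      have h2 := Finset.card_le_card this
      rw [Finset.card_insert_of_notMem (by simp [hi])] at h2
      omega
    have h2 : a j * x + b j ≤ g x := by
      rw [← not_lt, hg, not_le]
      have : W.filter (fun k => a k * x + b k < a j * x + b j) ⊆
          insert i (W.filter (fun k => a k * x₀ + b k < v)) := by
        intro k hk'
        obtain ⟨h1, h2⟩ := Finset.mem_filter.1 hk'
        rw [Finset.mem_insert, Finset.mem_filter]
        by_cases hki : k = i
        · exact Or.inl hki
        · right
          refine ⟨h1, ?_⟩
          have hkj : k ≠ j := by rintro rfl; exact lt_irrefl _ h2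
          rcases lt_or_gt_of_ne (hk k hki hkj) with h | h
          · exact h
          · have := hx j k (by linarith)
            linarith
      have h3 := (Finset.card_le_card this).trans (Finset.card_insert_le _ _)
      omega
    linarith
  rcases lt_trichotomy (a i * x + b i) (a j * x + b j) with h | h | h
  · exact key i j hij hiU hi hj hk h
  · exfalso
    have : (a i - a j) * (x - x₀) = 0 := by linarith
    rcases mul_eq_zero.1 this with h | h
    · exact hij (ha (by linarith))
    · exact hxne (by linarith)
  · exact key j i hij.symm hjU hj hi (fun k h1 h2 => hk k h2 h1) h

/-- Split the lines in three groups by slope. -/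
lemma exists_split (n : ℕ) (a : Fin (3 * n) → ℝ) (ha : Function.Injective a) :
    ∃ A B C : Finset (Fin (3 * n)), A.card = n ∧ B.card = n ∧ C.card = n ∧
      (∀ i ∈ A, ∀ j ∈ B, a i < a j) ∧ (∀ i ∈ B, ∀ j ∈ C, a i < a j) ∧
      (∀ i ∈ A, ∀ j ∈ C, a i < a j) ∧ (∀ i, i ∈ A ∨ i ∈ B ∨ i ∈ C) := by
  set σ := Tuple.sort a with hσ
  have hm : StrictMono (a ∘ σ) :=
    (Tuple.monotone_sort a).strictMono_of_injective (ha.comp σ.injective)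
  have hr : ∀ i j : Fin (3 * n), (σ.symm i).val < (σ.symm j).val → a i < a j := by
    intro i j h
    have := hm (show σ.symm i < σ.symm j from h)
    simpa using this
  have hcard : ∀ s : ℕ, s + n ≤ 3 * n → (Finset.univ.filter
      (fun i : Fin (3 * n) => s ≤ (σ.symm i).val ∧ (σ.symm i).val < s + n)).card = n := by
    intro s hs
    have : (Finset.Ico s (s + n)).card = n := by simp
    refine Eq.trans (Finset.card_bij (fun i _ => (σ.symm i).val) ?_ ?_ ?_) this
    · intro i hi; simp at hi; simp; omega
    · intro i _ j _ h
      exact σ.symm.injective (Fin.ext h)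
    · intro k hk
      rw [Finset.mem_Ico] at hk
      refine ⟨σ ⟨k, by omega⟩, ?_, ?_⟩
      · simp; omega
      · simp
  refine ⟨_, _, _, hcard 0 (by omega), hcard n (by omega), hcard (2 * n) (by omega), ?_, ?_, ?_, ?_⟩
  · intro i hi j hj; simp at hi hj; exact hr _ _ (by omega)
  · intro i hi j hj; simp at hi hj; exact hr _ _ (by omega)
  · intro i hi j hj; simp at hi hj; exact hr _ _ (by omega)
  · intro i
    have := (σ.symm i).isLt
    simp only [Finset.mem_filter, Finset.mem_univ, true_and]
    omega

set_option maxHeartbeats 1000000 in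
/-- The crossing point, with a consistent below/above labeling. -/
lemma exists_point {ι : Type*} [DecidableEq ι] [Fintype ι] (n : ℕ) (hn : 1 ≤ n) (a b : ι → ℝ)
    (ha : Function.Injective a)
    (h3 : ∀ i j k, i ≠ j → j ≠ k → i ≠ k → ∀ x v, a i * x + b i = v → a j * x + b j = v →
      a k * x + b k ≠ v)
    (A B C : Finset ι) (hA : A.card = n) (hB : B.card = n) (hC : C.card = n)
    (hAB : ∀ i ∈ A, ∀ j ∈ B, a i < a j) (hBC : ∀ i ∈ B, ∀ j ∈ C, a i < a j)
    (hAC : ∀ i ∈ A, ∀ j ∈ C, a i < a j) :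
    ∃ (x v : ℝ) (D : Finset ι), (∀ i ∈ D, a i * x + b i ≤ v) ∧
      (∀ i, i ∈ A ∨ i ∈ B ∨ i ∈ C → i ∉ D → v ≤ a i * x + b i) ∧
      (A.filter (· ∈ D)).card + (B.filter (· ∈ D)).card = n ∧
      (B.filter (· ∈ D)).card + (C.filter (· ∈ D)).card = n := by
  have dAB : Disjoint A B := Finset.disjoint_left.2 fun i h1 h2 => lt_irrefl _ (hAB i h1 i h2)
  have dBC : Disjoint B C := Finset.disjoint_left.2 fun i h1 h2 => lt_irrefl _ (hBC i h1 i h2)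
  have dAC : Disjoint A C := Finset.disjoint_left.2 fun i h1 h2 => lt_irrefl _ (hAC i h1 i h2)
  obtain ⟨f, fc, fle, flt⟩ := exists_orderStat a b n hn (A ∪ B)
    (by rw [Finset.card_union_of_disjoint dAB]; omega)
  obtain ⟨g, gc, gle, glt⟩ := exists_orderStat a b n hn (B ∪ C)
    (by rw [Finset.card_union_of_disjoint dBC]; omega)
  -- behaviour at infinity
  have htop : ∀ i j, a i < a j → ∀ᶠ x : ℝ in Filter.atTop, a i * x + b i < a j * x + b j := by
    intro i j h
    filter_upwards [Filter.eventually_gt_atTop ((b i - b j) / (a j - a i))] with x hx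
    rw [div_lt_iff₀ (by linarith)] at hx
    nlinarith
  have hbot : ∀ i j, a i < a j → ∀ᶠ x : ℝ in Filter.atBot, a j * x + b j < a i * x + b i := by
    intro i j h
    filter_upwards [Filter.eventually_lt_atBot ((b i - b j) / (a j - a i))] with x hx
    rw [lt_div_iff₀ (by linarith)] at hx
    nlinarith
  have htop' : ∀ᶠ x : ℝ in Filter.atTop, ∀ i j, a i < a j → a i * x + b i < a j * x + b j := by
    rw [Filter.eventually_all]; intro i
    rw [Filter.eventually_all]; intro j
    by_cases h : a i < a j
    · filter_upwards [htop i j h] with x hx _ using hx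
    · exact Filter.Eventually.of_forall fun x h' => absurd h' h
  have hbot' : ∀ᶠ x : ℝ in Filter.atBot, ∀ i j, a i < a j → a j * x + b j < a i * x + b i := by
    rw [Filter.eventually_all]; intro i
    rw [Filter.eventually_all]; intro j
    by_cases h : a i < a j
    · filter_upwards [hbot i j h] with x hx _ using hx
    · exact Filter.Eventually.of_forall fun x h' => absurd h' h
  have hsep : ∀ (x : ℝ) (p q : ℝ → ℝ) (U W E : Finset ι), E ⊆ U → E.card = n →
      (∀ x v, p x ≤ v ↔ n ≤ (U.filter (fun i => a i * x + b i ≤ v)).card) →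
      (∀ x v, q x ≤ v ↔ n ≤ (W.filter (fun i => a i * x + b i ≤ v)).card) →
      (∀ i ∈ E, ∀ j ∈ W, a i * x + b i < a j * x + b j) → p x < q x := by
    intro x p q U W E hEU hE hp hq hEW
    by_contra hcon
    push Not at hcon
    have h1 := (hq x (q x)).1 le_rfl
    obtain ⟨j, hj⟩ : (W.filter (fun i => a i * x + b i ≤ q x)).Nonempty := by
      rw [← Finset.card_pos]; omega
    obtain ⟨hjW, hjq⟩ := Finset.mem_filter.1 hj
    have hEne : E.Nonempty := by rw [← Finset.card_pos]; omega
    obtain ⟨e, heE, he⟩ := Finset.exists_max_image E (fun i => a i * x + b i) hEne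
    have h2 : p x ≤ a e * x + b e := by
      rw [hp, ← hE]
      apply Finset.card_le_card
      intro i hi
      exact Finset.mem_filter.2 ⟨hEU hi, he i hi⟩
    have := hEW e heE j hjW
    linarith
  have hT1 : ∀ᶠ x : ℝ in Filter.atTop, f x < g x := by
    filter_upwards [htop'] with x hx
    refine hsep x f g _ _ A Finset.subset_union_left hA fle gle ?_
    intro i hi j hj
    rcases Finset.mem_union.1 hj with hj | hj
    · exact hx _ _ (hAB i hi j hj)
    · exact hx _ _ (hAC i hi j hj)
  have hT2 : ∀ᶠ x : ℝ in Filter.atBot, g x < f x := by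
    filter_upwards [hbot'] with x hx
    refine hsep x g f _ _ C Finset.subset_union_right hC gle fle ?_
    intro i hi j hj
    rcases Finset.mem_union.1 hj with hj | hj
    · exact hx _ _ (hAC j hj i hi)
    · exact hx _ _ (hBC j hj i hi)
  set T : Set ℝ := {x | f x < g x} with hT
  have hTne : T.Nonempty := hT1.exists
  have hTbdd : BddBelow T := by
    obtain ⟨M, hM⟩ := Filter.eventually_atBot.1 hT2
    refine ⟨M, fun x hx => ?_⟩
    by_contra hlt
    push Not at hlt
    have := hM x hlt.le
    exact lt_asymm this hx
  have hTopen : IsOpen T := isOpen_lt fc gc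
  set x₀ := sInf T with hx₀
  have hcl : x₀ ∈ closure T := csInf_mem_closure hTne hTbdd
  have hnot : ∀ x, x < x₀ → x ∉ T := fun x hx h => absurd (csInf_le hTbdd h) (not_le.2 hx)
  have hfreqL : ∃ᶠ x in nhds x₀, x < x₀ :=
    (frequently_lt_nhds x₀)
  have hx₀T : x₀ ∉ T := by
    intro h
    obtain ⟨x, hx1, hx2⟩ := (hfreqL.and_eventually (hTopen.mem_nhds h)).exists
    exact hnot x hx1 hx2
  have hle : f x₀ ≤ g x₀ := closure_lt_subset_le fc gc hcl
  have heq : g x₀ = f x₀ := le_antisymm (not_lt.1 hx₀T) hle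
  have hfreqT : ∃ᶠ x in nhds x₀, x ∈ T := mem_closure_iff_frequently.1 hcl
  set v := f x₀ with hv
  -- the strict lower part and the zero part
  let P : Finset ι → ℕ := fun U => (U.filter (fun k => a k * x₀ + b k < v)).card
  let Z : Finset ι → Finset ι := fun U => U.filter (fun k => a k * x₀ + b k = v)
  have hPZ : ∀ U : Finset ι, (U.filter (fun k => a k * x₀ + b k ≤ v)).card = P U + (Z U).card := by
    intro U
    rw [← Finset.card_union_of_disjoint]
    · congr 1
      ext k
      simp only [Finset.mem_filter, Finset.mem_union, Z, le_iff_lt_or_eq]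
      tauto
    · rw [Finset.disjoint_left]
      intro k h1 h2
      exact (Finset.mem_filter.1 h1).2.ne (Finset.mem_filter.1 h2).2
  have hPadd : ∀ U W : Finset ι, Disjoint U W → P (U ∪ W) = P U + P W := by
    intro U W h
    simp only [P]
    rw [Finset.filter_union, Finset.card_union_of_disjoint (Finset.disjoint_filter_filter h)]
  have hZadd : ∀ U W : Finset ι, Disjoint U W → (Z (U ∪ W)).card = (Z U).card + (Z W).card := by
    intro U W h
    simp only [Z]
    rw [Finset.filter_union, Finset.card_union_of_disjoint (Finset.disjoint_filter_filter h)]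
  have e1 : P A + P B < n := by
    rw [← hPadd A B dAB]
    exact not_le.1 fun h => lt_irrefl _ ((flt x₀ v).2 h)
  have e2 : n ≤ P A + P B + ((Z A).card + (Z B).card) := by
    rw [← hPadd A B dAB, ← hZadd A B dAB, ← hPZ]
    exact (fle x₀ v).1 le_rfl
  have e3 : P B + P C < n := by
    rw [← hPadd B C dBC]
    exact not_le.1 fun h => lt_irrefl _ (heq ▸ (glt x₀ v).2 h)
  have e4 : n ≤ P B + P C + ((Z B).card + (Z C).card) := by
    rw [← hPadd B C dBC, ← hZadd B C dBC, ← hPZ]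
    exact (gle x₀ v).1 heq.le
  have e5 : (Z A).card + (Z B).card + (Z C).card ≤ 2 := by
    rw [← hZadd A B dAB, ← hZadd (A ∪ B) C (Finset.disjoint_union_left.2 ⟨dAC, dBC⟩)]
    by_contra hcon
    push Not at hcon
    obtain ⟨i, j, k, hi, hj, hk, h1, h2, h3'⟩ := Finset.two_lt_card_iff.1 hcon
    exact h3 i j k h1 h3' h2 x₀ v (Finset.mem_filter.1 hi).2 (Finset.mem_filter.1 hj).2
      (Finset.mem_filter.1 hk).2
  have e6 : (Z B).card = 2 → P A = P C := by
    intro h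
    obtain ⟨i, j, hij, hZ⟩ := Finset.card_eq_two.1 h
    have hi : i ∈ Z B := by rw [hZ]; simp
    have hj : j ∈ Z B := by rw [hZ]; simp
    obtain ⟨hiB, hi⟩ := Finset.mem_filter.1 hi
    obtain ⟨hjB, hj⟩ := Finset.mem_filter.1 hj
    have hk : ∀ k, k ≠ i → k ≠ j → a k * x₀ + b k ≠ v := fun k h1 h2 =>
      h3 i j k hij h2.symm h1.symm x₀ v hi hj
    by_contra hne
    rcases lt_or_gt_of_ne hne with hlt | hlt
    · -- `g < f` on both sides
      have := tangency a b n ha (B ∪ C) (A ∪ B) g f gle flt x₀ v i j hij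
        (Finset.mem_union_left _ hiB) (Finset.mem_union_left _ hjB) hi hj hk
        (by have := hPadd B C dBC; simp only [P] at this e1 e2 e3 e4 hlt; omega)
        (by have := hPadd A B dAB; simp only [P] at this e1 e2 e3 e4 hlt; omega)
      obtain ⟨x, hx1, hx2⟩ := (hfreqT.and_eventually this).exists
      have hne : x ≠ x₀ := by rintro rfl; exact hx₀T hx1
      exact lt_asymm hx1 (hx2 hne)
    · have := tangency a b n ha (A ∪ B) (B ∪ C) f g fle glt x₀ v i j hij
        (Finset.mem_union_right _ hiB) (Finset.mem_union_right _ hjB) hi hj hk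
        (by have := hPadd A B dAB; simp only [P] at this e1 e2 e3 e4 hlt; omega)
        (by have := hPadd B C dBC; simp only [P] at this e1 e2 e3 e4 hlt; omega)
      obtain ⟨x, hx1, hx2⟩ := (hfreqL.and_eventually this).exists
      exact hnot x hx1 (hx2 hx1.ne)
  obtain ⟨ta, tb, tc, h1, h2, h3a, h4, h5⟩ : ∃ ta tb tc : ℕ, ta ≤ (Z A).card ∧ tb ≤ (Z B).card ∧
      tc ≤ (Z C).card ∧ P A + ta + (P B + tb) = n ∧ P B + tb + (P C + tc) = n := by
    by_cases h : (Z B).card = 2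
    · have := e6 h
      exact ⟨0, n - P A - P B, 0, by omega, by omega, by omega, by omega, by omega⟩
    · exact ⟨n - P A - P B - (Z B).card, (Z B).card, n - P B - P C - (Z B).card,
        by omega, by omega, by omega, by omega, by omega⟩
  obtain ⟨TA, sA, cA⟩ := Finset.exists_subset_card_eq h1
  obtain ⟨TB, sB, cB⟩ := Finset.exists_subset_card_eq h2
  obtain ⟨TC, sC, cC⟩ := Finset.exists_subset_card_eq h3a
  have mA : ∀ i ∈ TA, i ∈ A ∧ a i * x₀ + b i = v := fun i hi => Finset.mem_filter.1 (sA hi)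
  have mB : ∀ i ∈ TB, i ∈ B ∧ a i * x₀ + b i = v := fun i hi => Finset.mem_filter.1 (sB hi)
  have mC : ∀ i ∈ TC, i ∈ C ∧ a i * x₀ + b i = v := fun i hi => Finset.mem_filter.1 (sC hi)
  have nAB := Finset.disjoint_left.1 dAB
  have nBC := Finset.disjoint_left.1 dBC
  have nAC := Finset.disjoint_left.1 dAC
  have hcount : ∀ (U TU D : Finset ι), TU ⊆ Z U →
      (∀ i ∈ U, i ∈ D ↔ (a i * x₀ + b i < v ∨ i ∈ TU)) →
      (U.filter (· ∈ D)).card = P U + TU.card := by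
    intro U TU D hTU hD
    rw [← Finset.card_union_of_disjoint]
    · congr 1
      ext k
      simp only [Finset.mem_filter, Finset.mem_union]
      have q1 : k ∈ TU → k ∈ U := fun h => (Finset.mem_filter.1 (hTU h)).1
      have q2 := hD k
      clear * - q1 q2
      tauto
    · rw [Finset.disjoint_left]
      intro k h1 h2
      exact (Finset.mem_filter.1 h1).2.ne (Finset.mem_filter.1 (hTU h2)).2
  refine ⟨x₀, v, Finset.univ.filter (fun i => a i * x₀ + b i < v) ∪ (TA ∪ TB ∪ TC), ?_, ?_, ?_, ?_⟩
  · intro i hi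
    simp only [Finset.mem_union, Finset.mem_filter, Finset.mem_univ, true_and] at hi
    rcases hi with hi | (hi | hi) | hi
    · exact hi.le
    · exact (mA i hi).2.le
    · exact (mB i hi).2.le
    · exact (mC i hi).2.le
  · intro i _ hi
    simp only [Finset.mem_union, Finset.mem_filter, Finset.mem_univ, true_and, not_or] at hi
    exact not_lt.1 hi.1
  · rw [hcount A TA _ sA, hcount B TB _ sB, cA, cB, h4]
    · intro i hi
      simp only [Finset.mem_union, Finset.mem_filter, Finset.mem_univ, true_and]
      have q1 := mA i; have q2 := mC i; have q3 := @nAB i; have q4 := @nBC i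
      clear * - hi q1 q2 q3 q4
      tauto
    · intro i hi
      simp only [Finset.mem_union, Finset.mem_filter, Finset.mem_univ, true_and]
      have q1 := mB i; have q2 := mC i; have q3 := @nAB i; have q4 := @nAC i
      clear * - hi q1 q2 q3 q4
      tauto
  · rw [hcount C TC _ sC, hcount B TB _ sB, cC, cB, h5]
    · intro i hi
      simp only [Finset.mem_union, Finset.mem_filter, Finset.mem_univ, true_and]
      have q1 := mA i; have q2 := mC i; have q3 := @nAB i; have q4 := @nBC i
      clear * - hi q1 q2 q3 q4
      tauto
    · intro i hi
      simp only [Finset.mem_union, Finset.mem_filter, Finset.mem_univ, true_and]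
      have q1 := mB i; have q2 := mA i; have q3 := @nAC i; have q4 := @nBC i
      clear * - hi q1 q2 q3 q4
      tauto

/-- Enumerate a finset so that the elements of `D` come at the indices below `k`. -/
lemma exists_enum {ι : Type*} [DecidableEq ι] (n : ℕ) (A : Finset ι) (hA : A.card = n)
    (p : ι → Prop) [DecidablePred p] (k : ℕ) (hk : (A.filter p).card = k) :
    ∃ φ : Fin n → ι, Function.Injective φ ∧ (∀ m, φ m ∈ A) ∧ (∀ m, p (φ m) ↔ m.val < k) := by
  have hsum : (A.filter p).card + (A.filter (fun i => ¬ p i)).card = A.card :=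
    Finset.card_filter_add_card_filter_not p
  have e1 := (A.filter p).equivFinOfCardEq hk
  have e2 := (A.filter (fun i => ¬ p i)).equivFinOfCardEq (n := n - k) (by omega)
  have m1 : ∀ m, (e1.symm m).1 ∈ A ∧ p (e1.symm m).1 := fun m => Finset.mem_filter.1 (e1.symm m).2
  have m2 : ∀ m, (e2.symm m).1 ∈ A ∧ ¬ p (e2.symm m).1 := fun m => Finset.mem_filter.1 (e2.symm m).2
  have hspec : ∀ m : Fin n, p (if h : m.val < k then (e1.symm ⟨m.val, h⟩).1
    else (e2.symm ⟨m.val - k, by omega⟩).1) ↔ m.val < k := by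
    intro m
    by_cases h : m.val < k
    · simp only [h, dite_true, iff_true]; exact (m1 _).2
    · simp only [h, dite_false, iff_false]; exact (m2 _).2
  refine ⟨fun m => if h : m.val < k then (e1.symm ⟨m.val, h⟩).1
    else (e2.symm ⟨m.val - k, by omega⟩).1, ?_, ?_, hspec⟩
  · intro m m' h
    have hiff : m.val < k ↔ m'.val < k := by
      rw [← hspec m, ← hspec m']
      exact iff_of_eq (congrArg p h)
    by_cases hm : m.val < k
    · have hm' := hiff.1 hm
      simp only [hm, hm', dite_true] at h
      have := e1.symm.injective (Subtype.ext h)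
      exact Fin.ext (by simpa using this)
    · have hm' : ¬ m'.val < k := fun h => hm (hiff.2 h)
      simp only [hm, hm', dite_false] at h
      have := e2.symm.injective (Subtype.ext h)
      simp only [Fin.mk.injEq] at this
      exact Fin.ext (by omega)
  · intro m
    by_cases h : m.val < k
    · simp only [h, dite_true]; exact (m1 _).1
    · simp only [h, dite_false]; exact (m2 _).1

/-- The combinatorial core: a partition into alternating triples. -/
lemma core (n : ℕ) (hn : 1 ≤ n) (a b : Fin (3 * n) → ℝ) (ha : Function.Injective a)
    (h3 : ∀ i j k, i ≠ j → j ≠ k → i ≠ k → ∀ x v, a i * x + b i = v → a j * x + b j = v →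
      a k * x + b k ≠ v) :
    ∃ (c : Fin (3 * n) → Fin n) (x v : ℝ), ∀ m, {i | c i = m}.ncard = 3 ∧
      ∃ i j k, c i = m ∧ c j = m ∧ c k = m ∧ a i < a j ∧ a j < a k ∧
        ((a i * x + b i ≤ v ∧ v ≤ a j * x + b j ∧ a k * x + b k ≤ v) ∨
         (v ≤ a i * x + b i ∧ a j * x + b j ≤ v ∧ v ≤ a k * x + b k)) := by
  obtain ⟨A, B, C, hA, hB, hC, hAB, hBC, hAC, hcov⟩ := exists_split n a ha
  obtain ⟨x, v, D, hD, hD', c1, c2⟩ := exists_point n hn a b ha h3 A B C hA hB hC hAB hBC hAC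
  have hBn : (B.filter (· ∈ D)).card + (B.filter (fun i => ¬ i ∈ D)).card = B.card :=
    Finset.card_filter_add_card_filter_not _
  obtain ⟨φ, iφ, φA, φD⟩ := exists_enum n A hA (· ∈ D) _ rfl
  obtain ⟨ψ, iψ, ψB, ψD⟩ := exists_enum n B hB (fun i => ¬ i ∈ D) (A.filter (· ∈ D)).card (by omega)
  obtain ⟨χ, iχ, χC, χD⟩ := exists_enum n C hC (· ∈ D) (A.filter (· ∈ D)).card (by omega)
  let t : Fin n × Fin 3 → Fin (3 * n) := fun q => ![φ q.1, ψ q.1, χ q.1] q.2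
  have l1 : ∀ m m', a (φ m) < a (ψ m') := fun m m' => hAB _ (φA m) _ (ψB m')
  have l2 : ∀ m m', a (ψ m) < a (χ m') := fun m m' => hBC _ (ψB m) _ (χC m')
  have l3 : ∀ m m', a (φ m) < a (χ m') := fun m m' => hAC _ (φA m) _ (χC m')
  have tinj : Function.Injective t := by
    rintro ⟨m, s⟩ ⟨m', s'⟩ h
    have g1 := l1 m m'; have g2 := l2 m m'; have g3 := l3 m m'
    have g4 := l1 m' m; have g5 := l2 m' m; have g6 := l3 m' m
    fin_cases s <;> fin_cases s' <;> simp [t] at h <;>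
      first
      | (rw [iφ h])
      | (rw [iψ h])
      | (rw [iχ h])
      | (exfalso; rw [h] at g1; exact lt_irrefl _ g1)
      | (exfalso; rw [h] at g2; exact lt_irrefl _ g2)
      | (exfalso; rw [h] at g3; exact lt_irrefl _ g3)
      | (exfalso; rw [h] at g4; exact lt_irrefl _ g4)
      | (exfalso; rw [h] at g5; exact lt_irrefl _ g5)
      | (exfalso; rw [h] at g6; exact lt_irrefl _ g6)
  have tbij : Function.Bijective t := by
    rw [Fintype.bijective_iff_injective_and_card]
    exact ⟨tinj, by simp [mul_comm]⟩
  let e := Equiv.ofBijective t tbij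
  have he : ∀ q, e.symm (t q) = q := fun q => e.symm_apply_apply q
  refine ⟨fun i => (e.symm i).1, x, v, fun m => ⟨?_, φ m, ψ m, χ m, ?_, ?_, ?_, l1 m m, l2 m m, ?_⟩⟩
  · have : {i | (e.symm i).1 = m} = (fun s => t (m, s)) '' (Set.univ : Set (Fin 3)) := by
      ext i
      simp only [Set.mem_setOf_eq, Set.image_univ, Set.mem_range]
      constructor
      · rintro rfl
        exact ⟨(e.symm i).2, e.apply_symm_apply i⟩
      · rintro ⟨s, rfl⟩
        rw [he]
    rw [this, Set.ncard_image_of_injective _ (fun s s' h => by simpa using tinj h)]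
    simp [Set.ncard_univ]
  · exact congrArg Prod.fst (he (m, 0))
  · exact congrArg Prod.fst (he (m, 1))
  · exact congrArg Prod.fst (he (m, 2))
  · by_cases hm : m.val < (A.filter (· ∈ D)).card
    · left
      exact ⟨hD _ ((φD m).2 hm), hD' _ (hcov _) ((ψD m).2 hm), hD _ ((χD m).2 hm)⟩
    · right
      refine ⟨hD' _ (hcov _) (fun h => hm ((φD m).1 h)), hD _ ?_,
        hD' _ (hcov _) (fun h => hm ((χD m).1 h))⟩
      by_contra h
      exact hm ((ψD m).1 h)

/-- Barycentric coordinates of a point of a triangle. -/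
lemma bary (a₁ a₂ a₃ b₁ b₂ b₃ x v : ℝ) (h12 : a₁ < a₂) (h23 : a₂ < a₃)
    (hnc : ¬ (a₁ * x + b₁ = v ∧ a₂ * x + b₂ = v ∧ a₃ * x + b₃ = v))
    (h : (a₁ * x + b₁ ≤ v ∧ v ≤ a₂ * x + b₂ ∧ a₃ * x + b₃ ≤ v) ∨
      (v ≤ a₁ * x + b₁ ∧ a₂ * x + b₂ ≤ v ∧ v ≤ a₃ * x + b₃)) :
    ∃ p q r x₁ x₂ x₃ : ℝ, 0 ≤ p ∧ 0 ≤ q ∧ 0 ≤ r ∧ p + q + r = 1 ∧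
      a₂ * x₁ + b₂ = a₃ * x₁ + b₃ ∧ a₁ * x₂ + b₁ = a₃ * x₂ + b₃ ∧ a₁ * x₃ + b₁ = a₂ * x₃ + b₂ ∧
      p * x₁ + q * x₂ + r * x₃ = x ∧
      p * (a₂ * x₁ + b₂) + q * (a₁ * x₂ + b₁) + r * (a₁ * x₃ + b₁) = v := by
  have d1 : 0 < a₃ - a₂ := by linarith
  have d2 : 0 < a₃ - a₁ := by linarith
  have d3 : 0 < a₂ - a₁ := by linarith
  obtain ⟨r₁, hr1⟩ : ∃ r, r = v - (a₁ * x + b₁) := ⟨_, rfl⟩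
  obtain ⟨r₂, hr2⟩ : ∃ r, r = (a₂ * x + b₂) - v := ⟨_, rfl⟩
  obtain ⟨r₃, hr3⟩ : ∃ r, r = v - (a₃ * x + b₃) := ⟨_, rfl⟩
  obtain ⟨S, hS⟩ : ∃ S, S = (a₃ - a₂) * r₁ + (a₃ - a₁) * r₂ + (a₂ - a₁) * r₃ := ⟨_, rfl⟩
  have hsign : S ≠ 0 ∧ 0 ≤ (a₃ - a₂) * r₁ / S ∧ 0 ≤ (a₃ - a₁) * r₂ / S ∧
      0 ≤ (a₂ - a₁) * r₃ / S := by
    rcases h with ⟨g1, g2, g3⟩ | ⟨g1, g2, g3⟩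
    · have k1 : 0 ≤ (a₃ - a₂) * r₁ := mul_nonneg d1.le (by linarith)
      have k2 : 0 ≤ (a₃ - a₁) * r₂ := mul_nonneg d2.le (by linarith)
      have k3 : 0 ≤ (a₂ - a₁) * r₃ := mul_nonneg d3.le (by linarith)
      have kS : 0 ≤ S := by linarith
      refine ⟨fun h0 => hnc ?_, div_nonneg k1 kS, div_nonneg k2 kS, div_nonneg k3 kS⟩
      have z1 : (a₃ - a₂) * r₁ = 0 := by linarith
      have z2 : (a₃ - a₁) * r₂ = 0 := by linarith
      have z3 : (a₂ - a₁) * r₃ = 0 := by linarith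
      have z1 := (mul_eq_zero.1 z1).resolve_left d1.ne'
      have z2 := (mul_eq_zero.1 z2).resolve_left d2.ne'
      have z3 := (mul_eq_zero.1 z3).resolve_left d3.ne'
      refine ⟨?_, ?_, ?_⟩ <;> linarith
    · have k1 : (a₃ - a₂) * r₁ ≤ 0 := mul_nonpos_of_nonneg_of_nonpos d1.le (by linarith)
      have k2 : (a₃ - a₁) * r₂ ≤ 0 := mul_nonpos_of_nonneg_of_nonpos d2.le (by linarith)
      have k3 : (a₂ - a₁) * r₃ ≤ 0 := mul_nonpos_of_nonneg_of_nonpos d3.le (by linarith)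
      have kS : S ≤ 0 := by linarith
      refine ⟨fun h0 => hnc ?_, div_nonneg_of_nonpos k1 kS, div_nonneg_of_nonpos k2 kS,
        div_nonneg_of_nonpos k3 kS⟩
      have z1 : (a₃ - a₂) * r₁ = 0 := by linarith
      have z2 : (a₃ - a₁) * r₂ = 0 := by linarith
      have z3 : (a₂ - a₁) * r₃ = 0 := by linarith
      have z1 := (mul_eq_zero.1 z1).resolve_left d1.ne'
      have z2 := (mul_eq_zero.1 z2).resolve_left d2.ne'
      have z3 := (mul_eq_zero.1 z3).resolve_left d3.ne'
      refine ⟨?_, ?_, ?_⟩ <;> linarith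
  obtain ⟨hS0, s1, s2, s3⟩ := hsign
  have n1 := d1.ne'
  have n2 := d2.ne'
  have n3 := d3.ne'
  refine ⟨_, _, _, (b₂ - b₃) / (a₃ - a₂), (b₁ - b₃) / (a₃ - a₁), (b₁ - b₂) / (a₂ - a₁),
    s1, s2, s3, ?_, ?_, ?_, ?_, ?_, ?_⟩
  · field_simp; linarith
  · field_simp; ring
  · field_simp; ring
  · field_simp; ring
  · field_simp
    subst hS hr1 hr2 hr3
    ring
  · field_simp
    subst hS hr1 hr2 hr3
    ring

/-- A direction that is parallel to none of the lines. -/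
lemma exists_dir {ι : Type*} [Finite ι] (p q : ι → ℝ) (h : ∀ i, p i ≠ 0 ∨ q i ≠ 0) :
    ∃ t : ℝ, ∀ i, p i + t * q i ≠ 0 := by
  have hfin : (⋃ i, {t : ℝ | p i + t * q i = 0}).Finite := by
    apply Set.finite_iUnion
    intro i
    apply Set.Subsingleton.finite
    intro s hs t ht
    simp only [Set.mem_setOf_eq] at hs ht
    by_cases hq : q i = 0
    · exfalso
      rw [hq] at hs
      rcases h i with h | h
      · exact h (by linarith)
      · exact h hq
    · have : (s - t) * q i = 0 := by linarith
      have := (mul_eq_zero.1 this).resolve_right hq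
      linarith
  obtain ⟨t, ht⟩ := hfin.infinite_compl.nonempty
  refine ⟨t, fun i hi => ht (Set.mem_iUnion.2 ⟨i, hi⟩)⟩

/-- The dual Tverberg theorem in the plane: `3n` lines in general position in `ℝ²`
(any two meet in exactly one point, no three concurrent) can be partitioned into `n`
triples such that the `n` triangles formed by the triples (convex hulls of the pairwise
intersection points) have a common point. The partition is encoded by a labeling
`c : Fin (3n) → Fin n` all of whose fibers have three elements. -/
theorem dual_tverberg_plane (n : ℕ) (hn : 1 ≤ n)
    (L : Fin (3 * n) → Set (EuclideanSpace ℝ (Fin 2)))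
    (hL : ∀ i, IsLine (L i))
    (h2 : ∀ i j, i ≠ j → ∃! x, x ∈ L i ∧ x ∈ L j)
    (h3 : ∀ i j k, i ≠ j → j ≠ k → i ≠ k → ¬ ∃ x, x ∈ L i ∧ x ∈ L j ∧ x ∈ L k) :
    ∃ c : Fin (3 * n) → Fin n,
      (∀ m : Fin n, {i | c i = m}.ncard = 3) ∧
      ∃ x : EuclideanSpace ℝ (Fin 2), ∀ m : Fin n,
        x ∈ convexHull ℝ {p | ∃ i j, i ≠ j ∧ c i = m ∧ c j = m ∧ p ∈ L i ∧ p ∈ L j} := by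
  choose w d hw hLe using hL
  have hmem : ∀ i (y : EuclideanSpace ℝ (Fin 2)), y ∈ L i ↔ y 0 * w i 0 + y 1 * w i 1 = d i := by
    intro i y
    rw [hLe i, Set.mem_setOf_eq, PiLp.inner_apply, Fin.sum_univ_two]
    simp [mul_comm]
  obtain ⟨t, ht⟩ := exists_dir (fun i => w i 0) (fun i => w i 1) (by
    intro i
    by_contra hcon
    push Not at hcon
    apply hw i
    ext s
    fin_cases s
    · exact hcon.1
    · exact hcon.2)
  -- the point with coordinates `(x, v)`
  let pt : ℝ → ℝ → EuclideanSpace ℝ (Fin 2) := fun x v => !₂[v, x + t * v]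
  have hpt : ∀ i x v, pt x v ∈ L i ↔
      -(w i 1) / (w i 0 + t * w i 1) * x + d i / (w i 0 + t * w i 1) = v := by
    intro i x v
    have := ht i
    rw [hmem]
    simp only [pt]
    simp only [PiLp.toLp_apply, Matrix.cons_val_zero, Matrix.cons_val_one]
    field_simp
    constructor <;> intro h <;> linarith
  obtain ⟨a, haa⟩ : ∃ a : Fin (3 * n) → ℝ, a = fun i => -(w i 1) / (w i 0 + t * w i 1) := ⟨_, rfl⟩
  obtain ⟨b, hbb⟩ : ∃ b : Fin (3 * n) → ℝ, b = fun i => d i / (w i 0 + t * w i 1) := ⟨_, rfl⟩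
  have hpt' : ∀ i x v, pt x v ∈ L i ↔ a i * x + b i = v := by
    intro i x v; rw [hpt, haa, hbb]
  have hsurj : ∀ y, ∃ x v, y = pt x v := by
    intro y
    refine ⟨y 1 - t * y 0, y 0, ?_⟩
    ext s
    fin_cases s <;> simp [pt]
  have ha : Function.Injective a := by
    intro i j hij
    by_contra hne
    obtain ⟨y, ⟨hy1, hy2⟩, huniq⟩ := h2 i j hne
    obtain ⟨x, v, rfl⟩ := hsurj y
    have e1 := (hpt' i x v).1 hy1
    have e2 := (hpt' j x v).1 hy2
    have := huniq (pt (x + 1) (v + a i)) ⟨(hpt' i _ _).2 (by linarith),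
      (hpt' j _ _).2 (by rw [← hij] at e2 ⊢; linarith)⟩
    have h0 := congrArg (fun z : EuclideanSpace ℝ (Fin 2) => z 0) this
    have h1 := congrArg (fun z : EuclideanSpace ℝ (Fin 2) => z 1) this
    simp [pt] at h0 h1
    rw [h0] at h1
    simp at h1
  obtain ⟨c, x, v, hc⟩ := core n hn a b ha (by
    intro i j k h1 h2 h3' x v e1 e2 e3
    exact h3 i j k h1 h2 h3' ⟨pt x v, (hpt' _ _ _).2 e1, (hpt' _ _ _).2 e2, (hpt' _ _ _).2 e3⟩)
  refine ⟨c, fun m => (hc m).1, pt x v, fun m => ?_⟩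
  obtain ⟨-, i, j, k, ci, cj, ck, hij, hjk, hs⟩ := hc m
  have nij : i ≠ j := by rintro rfl; exact lt_irrefl _ hij
  have njk : j ≠ k := by rintro rfl; exact lt_irrefl _ hjk
  have nik : i ≠ k := by rintro rfl; exact lt_asymm hij hjk
  obtain ⟨p, q, r, x₁, x₂, x₃, hp, hq, hr, hsum, e1, e2, e3, ex, ev⟩ :=
    bary (a i) (a j) (a k) (b i) (b j) (b k) x v hij hjk (by
      rintro ⟨e1, e2, e3⟩
      exact h3 i j k nij njk nik
        ⟨pt x v, (hpt' _ _ _).2 e1, (hpt' _ _ _).2 e2, (hpt' _ _ _).2 e3⟩) hs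
  have hcomb : pt x v = p • pt x₁ (a j * x₁ + b j) + q • pt x₂ (a i * x₂ + b i) +
      r • pt x₃ (a i * x₃ + b i) := by
    rw [← ex, ← ev]
    ext s
    fin_cases s
    · simp [pt]
    · simp [pt]; ring
  rw [hcomb]
  have hconv := convex_convexHull ℝ {p | ∃ i j, i ≠ j ∧ c i = m ∧ c j = m ∧ p ∈ L i ∧ p ∈ L j}
  have m1 : pt x₁ (a j * x₁ + b j) ∈
      convexHull ℝ {p | ∃ i j, i ≠ j ∧ c i = m ∧ c j = m ∧ p ∈ L i ∧ p ∈ L j} :=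
    subset_convexHull ℝ _ ⟨j, k, njk, cj, ck, (hpt' _ _ _).2 rfl, (hpt' _ _ _).2 e1.symm⟩
  have m2 : pt x₂ (a i * x₂ + b i) ∈
      convexHull ℝ {p | ∃ i j, i ≠ j ∧ c i = m ∧ c j = m ∧ p ∈ L i ∧ p ∈ L j} :=
    subset_convexHull ℝ _ ⟨i, k, nik, ci, ck, (hpt' _ _ _).2 rfl, (hpt' _ _ _).2 e2.symm⟩
  have m3 : pt x₃ (a i * x₃ + b i) ∈
      convexHull ℝ {p | ∃ i j, i ≠ j ∧ c i = m ∧ c j = m ∧ p ∈ L i ∧ p ∈ L j} :=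
    subset_convexHull ℝ _ ⟨i, j, nij, ci, cj, (hpt' _ _ _).2 rfl, (hpt' _ _ _).2 e3.symm⟩
  have := hconv.sum_mem (t := Finset.univ) (w := ![p, q, r])
    (z := ![pt x₁ (a j * x₁ + b j), pt x₂ (a i * x₂ + b i), pt x₃ (a i * x₃ + b i)])
    (by intro s _; fin_cases s <;> simp [hp, hq, hr])
    (by simpa [Fin.sum_univ_three] using hsum)
    (by
      intro s _
      fin_cases s
      · exact m1
      · exact m2
      · exact m3)
  simpa [Fin.sum_univ_three] using this
end
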